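/- arXiv:2012.15357 — 4 statements merged into one kernel-verified Lean document; each statement's English description precedes it below -/
import Mathlib

section
/- Let q = 2^{2s} with s ≥ 1, let w ∈ F_q satisfy w² = w + 1, let f_w(x) = x^{q^4} + w x^{q³} + w x^q + x ∈ F_{q^5}[x] and let f̂_w(x) = x + x^q + w x^{q²} + w x^{q^4} be its adjoint. For an F_q-linearized polynomial g over F_{q^5}, set U_g = { (x, g(x)) : x ∈ F_{q^5} } ⊆ F_{q^5}² and L_g = { ⟨(x, g(x))⟩_{F_{q^5}} : x ∈ F_{q^5}^* }. If g is an F_q-linearized polynomial over F_{q^5} with L_g = L_{f_w}, then there exists λ ∈ F_{q^5}^* such that λ·U_g = U_{f_w} or λ·U_g = U_{f̂_w}. -/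
namespace S10
open Finset

def G {K : Type} [Field K] (q : ℕ) (c : Fin 5 → K) (x : K) : K := ∑ i : Fin 5, c i * x ^ q ^ (i : ℕ)
def sh {K : Type} [Field K] (q : ℕ) (c : Fin 5 → K) : Fin 5 → K := fun i => c (i - 1) ^ q

lemma sumS {K : Type} [Field K] [Fintype K] [DecidableEq K] {m n : ℕ} (hm : m < Fintype.card K - 1)
    (hn : n < Fintype.card K - 1) :
    ∑ u : Kˣ, (u : K) ^ m * ((u : K) ^ n)⁻¹ = if m = n then -1 else 0 := by
  have h1 : ∀ u : Kˣ, (u : K) ^ m * ((u : K) ^ n)⁻¹ = (u : K) ^ (m + (Fintype.card K - 1 - n)) := by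
    intro u
    have hu : (u : K) ≠ 0 := u.ne_zero
    have : (u : K) ^ (Fintype.card K - 1) = 1 := FiniteField.pow_card_sub_one_eq_one _ hu
    rw [pow_add]
    congr 1
    apply inv_eq_of_mul_eq_one_right
    rw [← pow_add, ← this]; congr 1; omega
  rw [Finset.sum_congr rfl (fun u _ => h1 u)]
  have := FiniteField.sum_pow_units K (m + (Fintype.card K - 1 - n))
  rw [this]
  congr 1
  apply propext
  constructor
  · rintro ⟨c, hc⟩
    have : c = 1 := by
      rcases c with _ | _ | c
      · omega
      · rfl
      · exfalso
        have : (Fintype.card K - 1) * (c + 1 + 1) = (Fintype.card K - 1) * c + 2 * (Fintype.card K - 1) := by ring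
        have := Nat.zero_le ((Fintype.card K - 1) * c)
        omega
    subst this; omega
  · rintro rfl
    exact ⟨1, by omega⟩

set_option linter.unusedSectionVars false
set_option linter.unusedSimpArgs false
section
variable {K : Type} [Field K] [Fintype K] [DecidableEq K] {q : ℕ}

lemma G_frob (φ : K →+* K) (hφ : ∀ x, φ x = x ^ q) (hK : Fintype.card K = q ^ 5) (c : Fin 5 → K) (x : K) :
    (G q c x) ^ q = G q (sh q c) x := by
  have h5 : x ^ q ^ 5 = x := by rw [← hK]; exact FiniteField.pow_card x
  rw [← hφ]
  simp only [G, sh, map_add, map_mul, map_pow, Fin.sum_univ_five]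
  simp only [hφ]
  simp only [← pow_mul, ← pow_succ']
  simp [h5, show (0 - 1 : Fin 5) = 4 from rfl, show (2 - 1 : Fin 5) = 1 from rfl, show (3 - 1 : Fin 5) = 2 from rfl, show (4 - 1 : Fin 5) = 3 from rfl]
  ring

lemma qlt (hq : 4 ≤ q) (i j l : Fin 5) : q ^ (i : ℕ) + q ^ (j : ℕ) + q ^ (l : ℕ) < q ^ 5 - 1 := by
  have h : ∀ i : Fin 5, q ^ (i : ℕ) ≤ q ^ 4 := fun i => Nat.pow_le_pow_right (by omega) (by omega)
  have h1 : 4 * q ^ 4 ≤ q ^ 5 := by rw [pow_succ' q 4]; exact Nat.mul_le_mul_right _ hq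
  have h2 : 4 ^ 4 ≤ q ^ 4 := Nat.pow_le_pow_left hq 4
  have := h i; have := h j; have := h l
  omega

def cnt (i j l : Fin 5) : List ℕ := (List.finRange 5).map fun t =>
  (if i = t then 1 else 0) + (if j = t then 1 else 0) + (if l = t then 1 else 0)

lemma cnt_lt (i j l : Fin 5) : ∀ d ∈ cnt i j l, d < 4 := by
  intro d hd
  simp only [cnt, List.mem_map] at hd
  obtain ⟨t, _, rfl⟩ := hd
  split_ifs <;> omega

lemma cnt_digits (i j l : Fin 5) : Nat.ofDigits q (cnt i j l) = q ^ (i : ℕ) + q ^ (j : ℕ) + q ^ (l : ℕ) := by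
  have key : ∀ i : Fin 5, q ^ (i : ℕ) = (if i = 0 then 1 else 0) + (if i = 1 then 1 else 0) * q +
    (if i = 2 then 1 else 0) * q ^ 2 + (if i = 3 then 1 else 0) * q ^ 3 + (if i = 4 then 1 else 0) * q ^ 4 := by
    intro i; fin_cases i <;> simp
  rw [key i, key j, key l]
  simp only [cnt, List.finRange_succ, List.finRange_zero, List.map_cons, List.map_nil, Nat.ofDigits_cons, Nat.ofDigits_nil]
  simp
  simp only [Fin.ext_iff, Fin.val_succ]
  push_cast
  simp
  ring_nf
  simp only [mul_ite, mul_one, mul_zero]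
  ring

lemma cnt_iff (hq : 4 ≤ q) (i j l i' j' l' : Fin 5) :
    (q ^ (i : ℕ) + q ^ (j : ℕ) + q ^ (l : ℕ) = q ^ (i' : ℕ) + q ^ (j' : ℕ) + q ^ (l' : ℕ)) ↔
      cnt i j l = cnt i' j' l' := by
  rw [← cnt_digits, ← cnt_digits]
  constructor
  · intro h
    refine Nat.ofDigits_inj_of_len_eq (b := q) (by omega) (by simp [cnt]) ?_ ?_ h
    · intro d hd; have := cnt_lt _ _ _ d hd; omega
    · intro d hd; have := cnt_lt _ _ _ d hd; omega
  · intro h; rw [h]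

lemma mom3 (hq : 4 ≤ q) (hK : Fintype.card K = q ^ 5) (a b c : Fin 5 → K) (i' j' l' : Fin 5) :
    ∑ u : Kˣ, (G q a u * G q b u * G q c u) * ((u : K) ^ (q ^ (i' : ℕ) + q ^ (j' : ℕ) + q ^ (l' : ℕ)))⁻¹
     = - ∑ i, ∑ j, ∑ l, if cnt i j l = cnt i' j' l' then a i * b j * c l else 0 := by
  have h : ∀ u : Kˣ, (G q a u * G q b u * G q c u) * ((u : K) ^ (q ^ (i' : ℕ) + q ^ (j' : ℕ) + q ^ (l' : ℕ)))⁻¹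
     = ∑ i, ∑ j, ∑ l, a i * b j * c l * ((u : K) ^ (q ^ (i : ℕ) + q ^ (j : ℕ) + q ^ (l : ℕ)) * ((u : K) ^ (q ^ (i' : ℕ) + q ^ (j' : ℕ) + q ^ (l' : ℕ)))⁻¹) := by
    intro u
    unfold G
    rw [Finset.sum_mul_sum, Finset.sum_mul, Finset.sum_mul]
    refine Finset.sum_congr rfl fun i _ => ?_
    rw [Finset.sum_mul, Finset.sum_mul]
    refine Finset.sum_congr rfl fun j _ => ?_
    rw [Finset.mul_sum, Finset.sum_mul]
    refine Finset.sum_congr rfl fun l _ => ?_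
    rw [pow_add ((u:K)) (q ^ (i : ℕ) + q ^ (j : ℕ)), pow_add ((u:K)) (q ^ (i : ℕ))]
    ring
  rw [Finset.sum_congr rfl (fun u _ => h u), Finset.sum_comm, ← Finset.sum_neg_distrib]
  refine Finset.sum_congr rfl fun i _ => ?_
  rw [Finset.sum_comm, ← Finset.sum_neg_distrib]
  refine Finset.sum_congr rfl fun j _ => ?_
  rw [Finset.sum_comm, ← Finset.sum_neg_distrib]
  refine Finset.sum_congr rfl fun l _ => ?_
  rw [← Finset.mul_sum, sumS (by rw [hK]; exact qlt hq _ _ _) (by rw [hK]; exact qlt hq _ _ _)]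
  simp only [cnt_iff hq]
  split_ifs <;> simp

/-- identity map coefficients -/
def e0 : Fin 5 → K := ![1, 0, 0, 0, 0]
lemma G_e0 (x : K) : G q e0 x = x := by simp [G, e0, Fin.sum_univ_five]

lemma momK1 (hq : 4 ≤ q) (hK : Fintype.card K = q ^ 5) (a : Fin 5 → K) :
    ∑ u : Kˣ, G q a u / u = - a 0 := by
  have := mom3 hq hK a e0 e0 0 0 0
  trans
  · trans
    swap
    · exact this
    · refine Finset.sum_congr rfl fun u _ => ?_
      have hu : (u : K) ≠ 0 := u.ne_zero
      simp only [G_e0]; simp; field_simp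
  · simp +decide [Fin.sum_univ_five, e0]

lemma mom2 (hq : 4 ≤ q) (hK : Fintype.card K = q ^ 5) (a b : Fin 5 → K) (k : Fin 5) :
    ∑ u : Kˣ, G q a u / u * (G q b u / (u : K) ^ (q ^ (k : ℕ))) = 
    - ∑ i, ∑ j, if cnt i j 0 = cnt 0 k 0 then a i * b j else 0 := by
  have := mom3 hq hK a b e0 0 k 0
  trans
  · trans
    swap
    · exact this
    · refine Finset.sum_congr rfl fun u _ => ?_
      have hu : (u : K) ≠ 0 := u.ne_zero
      simp only [G_e0, pow_add]; simp; field_simp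
  · congr 1
    refine Finset.sum_congr rfl fun i _ => Finset.sum_congr rfl fun j _ => ?_
    simp [Fin.sum_univ_five, e0]

lemma mom3' (hq : 4 ≤ q) (hK : Fintype.card K = q ^ 5) (a b c : Fin 5 → K) (k l : Fin 5) :
    ∑ u : Kˣ, G q a u / u * (G q b u / (u : K) ^ (q ^ (k : ℕ))) * (G q c u / (u : K) ^ (q ^ (l : ℕ)))= 
    - ∑ i, ∑ j, ∑ m, if cnt i j m = cnt 0 k l then a i * b j * c m else 0 := by
  rw [← mom3 hq hK a b c 0 k l]
  refine Finset.sum_congr rfl fun u _ => ?_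
  have hu : (u : K) ≠ 0 := u.ne_zero
  simp only [pow_add]; simp; field_simp

/-- fibers have odd size, so power sums depend on the image only -/
lemma fiber [CharP K 2] (A : K →+ K) (m : K) (h : ∃ x : Kˣ, A x / x = m) :
    ((#{u : Kˣ | A u / u = m} : ℕ) : K) = 1 := by
  let H : AddSubgroup K := (A - AddMonoidHom.mulLeft m).ker
  have hH : ∀ x, x ∈ H ↔ A x = m * x := by
    intro x; simp [H, AddMonoidHom.mem_ker, sub_eq_zero]
  have hcard : #{u : Kˣ | A u / u = m} + 1 = Nat.card H := by
    have : #{u : Kˣ | A u / u = m} = #((Finset.univ.filter fun x : K => x ∈ H) \ {0}) := by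
      refine Finset.card_bij (fun u _ => (u : K)) ?_ ?_ ?_
      · intro u hu
        have hu0 : (u : K) ≠ 0 := u.ne_zero
        simp [hH] at hu ⊢
        rw [← hu]; field_simp
      · intro a _ b _ hab; exact Units.ext hab
      · intro x hx
        simp [hH] at hx
        refine ⟨Units.mk0 x hx.2, ?_, rfl⟩
        simp [hx.1, hx.2]
    rw [this, Finset.card_sdiff_of_subset (by simp [H.zero_mem])]
    have h0 : 0 < #(Finset.univ.filter fun x : K => x ∈ H) := Finset.card_pos.2 ⟨0, by simp [H.zero_mem]⟩
    rw [Finset.card_singleton, Nat.sub_add_cancel h0, Nat.card_eq_fintype_card, Fintype.card_subtype]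
  have h2 : 2 ∣ Nat.card H := by
    obtain ⟨x, hx⟩ := h
    have hx0 : (x : K) ≠ 0 := x.ne_zero
    have hxH : (x : K) ∈ H := by rw [hH, ← hx]; field_simp
    have : addOrderOf (⟨x, hxH⟩ : H) = 2 := by
      apply addOrderOf_eq_prime
      · ext; simp [CharTwo.two_eq_zero]
      · intro h0; exact hx0 (congrArg Subtype.val h0)
    rw [← this]; exact addOrderOf_dvd_natCard _
  have := (CharP.cast_eq_zero_iff K 2 _).2 h2
  rw [← hcard] at this
  push_cast at this
  rw [CharTwo.add_eq_zero] at this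
  exact this

lemma sumF [CharP K 2] (A B : K →+ K)
   (h1 : ∀ x : Kˣ, ∃ y : Kˣ, A x / x = B y / y) (h2 : ∀ x : Kˣ, ∃ y : Kˣ, B x / x = A y / y)
   (F : K → K) : ∑ u : Kˣ, F (A u / u) = ∑ u : Kˣ, F (B u / u) := by
  rw [Finset.sum_comp F (fun u : Kˣ => A u / u), Finset.sum_comp F (fun u : Kˣ => B u / u)]
  have : Finset.image (fun u : Kˣ => A u / u) univ = Finset.image (fun u : Kˣ => B u / u) univ := by
    ext m
    simp only [Finset.mem_image, Finset.mem_univ, true_and]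
    constructor
    · rintro ⟨x, rfl⟩; obtain ⟨y, hy⟩ := h1 x; exact ⟨y, hy.symm⟩
    · rintro ⟨x, rfl⟩; obtain ⟨y, hy⟩ := h2 x; exact ⟨y, hy.symm⟩
  rw [this]
  refine Finset.sum_congr rfl fun m hm => ?_
  have hB := hm
  rw [← this] at hm
  simp only [Finset.mem_image, Finset.mem_univ, true_and] at hm hB
  rw [nsmul_eq_mul, nsmul_eq_mul]
  have e1 := fiber A m hm
  have e2 := fiber B m hB
  rw [e1, e2]

lemma hilb (hq : 4 ≤ q) (hK : Fintype.card K = q ^ 5) (c : K)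
    (hc : c * c ^ q * c ^ q ^ 2 * c ^ q ^ 3 * c ^ q ^ 4 = 1) : ∃ l : K, l ≠ 0 ∧ l * c = l ^ q := by
  have hc0 : c ≠ 0 := by rintro rfl; simp at hc
  obtain ⟨γ, hγ⟩ := IsCyclic.exists_generator (α := Kˣ)
  obtain ⟨m, hm⟩ := (Submonoid.mem_powers_iff _ _).1 ((mem_powers_iff_mem_zpowers).2 (hγ (Units.mk0 c hc0)))
  have ho : orderOf γ = q ^ 5 - 1 := by
    rw [orderOf_eq_card_of_forall_mem_zpowers hγ, Nat.card_eq_fintype_card, Fintype.card_units, hK]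
  have hcm : c = (γ : K) ^ m := by
    have := congrArg Units.val hm; simpa using this.symm
  have h1 : γ ^ (m * (1 + q + q ^ 2 + q ^ 3 + q ^ 4)) = 1 := by
    ext
    push_cast
    rw [pow_mul, ← hcm, ← hc]; ring
  have h2 := orderOf_dvd_of_pow_eq_one h1
  obtain ⟨r, rfl⟩ : ∃ r, q = r + 1 := ⟨q - 1, by omega⟩
  have h3 : (r + 1) ^ 5 - 1 = r * (1 + (r + 1) + (r + 1) ^ 2 + (r + 1) ^ 3 + (r + 1) ^ 4) := by
    rw [Nat.sub_eq_iff_eq_add (Nat.one_le_pow _ _ (by omega))]; ring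
  rw [ho, h3] at h2
  obtain ⟨t, rfl⟩ := Nat.dvd_of_mul_dvd_mul_right (by positivity) h2
  refine ⟨(γ : K) ^ t, by simp, ?_⟩
  rw [hcm]; ring

lemma pw2 (y : K) (u : Kˣ) : (y / u) ^ q ^ 2 = (y ^ q) ^ q / (u : K) ^ (q ^ 2) := by
  rw [div_pow]; congr 1; ring
lemma pw3 (y : K) (u : Kˣ) : (y / u) ^ q ^ 3 = ((y ^ q) ^ q) ^ q / (u : K) ^ (q ^ 3) := by
  rw [div_pow]; congr 1; ring

lemma rel (hq : 4 ≤ q) (hK : Fintype.card K = q ^ 5) (φ : K →+* K) (hφ : ∀ x, φ x = x ^ q)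
    (a b : Fin 5 → K)
    (hF : ∀ F : K → K, ∑ u : Kˣ, F (G q a u / u) = ∑ u : Kˣ, F (G q b u / u)) :
    a 0 = b 0 ∧ a 1 * a 4 ^ q = b 1 * b 4 ^ q ∧ a 2 * (a 3 ^ q) ^ q = b 2 * (b 3 ^ q) ^ q ∧
    a 3 * ((a 2 ^ q) ^ q) ^ q = b 3 * ((b 2 ^ q) ^ q) ^ q ∧
    a 1 * a 1 ^ q * (a 3 ^ q) ^ q + a 2 * a 4 ^ q * (a 4 ^ q) ^ q
      = b 1 * b 1 ^ q * (b 3 ^ q) ^ q + b 2 * b 4 ^ q * (b 4 ^ q) ^ q ∧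
    a 1 * a 2 ^ q * ((a 2 ^ q) ^ q) ^ q + a 3 * a 4 ^ q * ((a 3 ^ q) ^ q) ^ q
      = b 1 * b 2 ^ q * ((b 2 ^ q) ^ q) ^ q + b 3 * b 4 ^ q * ((b 3 ^ q) ^ q) ^ q := by
  have fr := G_frob φ hφ hK
  have m1 := hF (fun m => m)
  rw [momK1 hq hK, momK1 hq hK, neg_inj] at m1
  have k1 := hF (fun m => m * m ^ q)
  have k2 := hF (fun m => m * m ^ q ^ 2)
  have k3 := hF (fun m => m * m ^ q ^ 3)
  have l2 := hF (fun m => m * m ^ q * m ^ q ^ 2)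
  have l3 := hF (fun m => m * m ^ q * m ^ q ^ 3)
  simp only [pw2, pw3, fr] at k2 k3 l2 l3
  simp only [div_pow, fr] at k1 l2 l3
  have M2 := fun (a b : Fin 5 → K) => mom2 hq hK a b 1
  have M22 := fun (a b : Fin 5 → K) => mom2 hq hK a b 2
  have M23 := fun (a b : Fin 5 → K) => mom2 hq hK a b 3
  have M3 := fun (a b c : Fin 5 → K) => mom3' hq hK a b c 1 2
  have M33 := fun (a b c : Fin 5 → K) => mom3' hq hK a b c 1 3
  simp only [Fin.val_one, pow_one, show ((2 : Fin 5) : ℕ) = 2 from rfl,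
    show ((3 : Fin 5) : ℕ) = 3 from rfl] at M2 M22 M23 M3 M33
  rw [M2, M2, neg_inj] at k1
  rw [M22, M22, neg_inj] at k2
  rw [M23, M23, neg_inj] at k3
  rw [M3, M3, neg_inj] at l2
  rw [M33, M33, neg_inj] at l3
  simp +decide [Fin.sum_univ_five, sh] at k1 k2 k3 l2 l3
  simp only [show (-1 : Fin 5) = 4 from rfl, show (4 - 1 : Fin 5) = 3 from rfl,
    show (3 - 1 : Fin 5) = 2 from rfl] at k1 k2 k3 l2 l3
  rw [m1] at k1 k2 k3 l2 l3
  replace k1 := add_left_cancel k1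
  replace k2 := add_left_cancel k2
  replace k3 := add_left_cancel k3
  have k1' : a 1 ^ q * (a 4 ^ q) ^ q = b 1 ^ q * (b 4 ^ q) ^ q := by
    rw [← mul_pow, k1, mul_pow]
  have k2' : a 2 ^ q * ((a 3 ^ q) ^ q) ^ q = b 2 ^ q * ((b 3 ^ q) ^ q) ^ q := by
    rw [← mul_pow, k2, mul_pow]
  refine ⟨m1, k1, k2, k3, ?_, ?_⟩
  · linear_combination l2 - b 0 * k1' - (b 0 ^ q) ^ q * k1 - b 0 ^ q * k2
  · linear_combination l3 - b 0 * k2' - ((b 0 ^ q) ^ q) ^ q * k1 - b 0 ^ q * k3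

lemma G_add (φ : K →+* K) (hφ : ∀ x, φ x = x ^ q) (c : Fin 5 → K) (x y : K) :
    G q c (x + y) = G q c x + G q c y := by
  have h : ∀ i : ℕ, (x + y) ^ q ^ i = x ^ q ^ i + y ^ q ^ i := by
    intro i
    induction i with
    | zero => simp
    | succ i ih => rw [pow_succ, pow_mul, ih, ← hφ, map_add, hφ, hφ, ← pow_mul, ← pow_mul]
  simp only [G, h, mul_add, Finset.sum_add_distrib]

lemma span_div (g f : K → K) (x y : K) (hx : x ≠ 0) (hy : y ≠ 0)
    (h : Submodule.span K {(x, g x)} = Submodule.span K {(y, f y)}) : g x / x = f y / y := by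
  have h1 : (x, g x) ∈ Submodule.span K {(y, f y)} := by
    rw [← h]; exact Submodule.mem_span_singleton_self _
  obtain ⟨c, hc⟩ := Submodule.mem_span_singleton.1 h1
  simp only [Prod.smul_mk, smul_eq_mul, Prod.mk.injEq] at hc
  obtain ⟨h2, h3⟩ := hc
  have hc0 : c ≠ 0 := by rintro rfl; simp at h2; exact hx h2.symm
  rw [← h3, ← h2]; field_simp

lemma concl (a b : Fin 5 → K) (f g : K → K) (hf : ∀ x, f x = G q a x) (hg : ∀ x, g x = G q b x)
    (l : K) (hl : l ≠ 0) (h : ∀ i : Fin 5, l * b i = a i * l ^ q ^ (i : ℕ)) :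
    (fun u : K × K => l • u) '' {u : K × K | ∃ x : K, u = (x, g x)}
          = {u : K × K | ∃ x : K, u = (x, f x)} := by
  have key : ∀ x, l * g x = f (l * x) := by
    intro x
    rw [hf, hg]; unfold G
    rw [Finset.mul_sum]
    refine Finset.sum_congr rfl fun i _ => ?_
    rw [mul_pow, ← mul_assoc, ← mul_assoc, h]
  ext ⟨u, v⟩
  simp only [Set.mem_image, Set.mem_setOf_eq]
  constructor
  · rintro ⟨_, ⟨x, rfl⟩, h1⟩
    simp only [Prod.smul_mk, smul_eq_mul, Prod.mk.injEq] at h1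
    obtain ⟨rfl, rfl⟩ := h1
    exact ⟨l * x, by rw [key]⟩
  · rintro ⟨x, h1⟩
    refine ⟨_, ⟨l⁻¹ * x, rfl⟩, ?_⟩
    rw [h1]
    simp only [Prod.smul_mk, smul_eq_mul, key]
    rw [mul_inv_cancel_left₀ hl]

lemma case1 [CharP K 2] (hq : 4 ≤ q) (hK : Fintype.card K = q ^ 5) (φ : K →+* K) (hφ : ∀ x, φ x = x ^ q)
    (w : K) (hw : φ w = w) (hw2 : w ^ 2 = w + 1) (b1 b3 b4 : K)
    (e1 : b1 * φ b4 = w) (e2 : b1 * φ b1 * φ (φ b3) = 1) (e3 : b3 * φ b4 * φ (φ (φ b3)) = w ^ 2) :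
    ∃ l : K, l ≠ 0 ∧ l * b1 = w * l ^ q ∧ l * b3 = w * l ^ q ^ 3 ∧ l * b4 = l ^ q ^ 4 := by
  have w3 : w ^ 3 = 1 := by
    have h2 : (2 : K) = 0 := CharTwo.two_eq_zero
    linear_combination (w + 1) * hw2 + w * h2
  have hw0 : w ≠ 0 := by rintro rfl; simp at w3
  have hpow : ∀ x : K, x ^ q ^ 2 = φ (φ x) ∧ x ^ q ^ 3 = φ (φ (φ x)) ∧ x ^ q ^ 4 = φ (φ (φ (φ x))) := by
    intro x
    refine ⟨?_, ?_, ?_⟩ <;> simp only [hφ] <;> ring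
  have h5 : ∀ x : K, φ (φ (φ (φ (φ x)))) = x := by
    intro x
    have : x ^ q ^ 5 = x := by rw [← hK]; exact FiniteField.pow_card x
    rw [← this]; simp only [hφ]; rw [this]; nth_rw 2 [← this]; ring
  have f1 := congrArg φ e2
  have f2 := congrArg φ f1
  have f3 := congrArg φ f2
  simp only [map_mul, map_one, h5] at f1 f2 f3
  have hN : b1 * φ b1 * φ (φ b1) * φ (φ (φ b1)) * φ (φ (φ (φ b1))) = w ^ 2 := by
    have : b1 * φ b1 * φ (φ b1) * φ (φ (φ b1)) * φ (φ (φ (φ b1))) * w ^ 2 = w := by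
      rw [← e3]
      calc _ = (b1 * φ b4) * (φ b1 * φ (φ b1) * φ (φ (φ b3))) * (φ (φ (φ b1)) * φ (φ (φ (φ b1))) * b3) := by ring
        _ = w := by rw [e1, f1, f3]; ring
    apply mul_right_cancel₀ (pow_ne_zero 2 hw0)
    rw [this]; linear_combination - w * w3
  obtain ⟨l, hl, hlc⟩ := hilb hq hK (b1 * w ^ 2) (by
    simp only [hpow, ← hφ, map_mul, map_pow, hw]
    linear_combination w ^ 10 * hN + (w ^ 9 + w ^ 6 + w ^ 3 + 1) * w3)
  rw [← hφ] at hlc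
  have g1 : l * b1 = w * φ l := by rw [← hlc]; linear_combination (-l * b1) * w3
  have hl1 : φ l ≠ 0 := by simpa using hl
  have g4 : φ l * φ b4 = l := by
    apply mul_left_cancel₀ hw0
    linear_combination l * e1 - φ b4 * g1
  have g1' := congrArg φ g1
  simp only [map_mul, hw] at g1'
  have g3 : φ (φ l) * φ (φ b3) = w * l := by
    apply mul_left_cancel₀ hl1
    linear_combination w * (l * φ l * e2 - φ l * φ b1 * φ (φ b3) * g1 - w * φ l * φ (φ b3) * g1') - φ l * φ (φ l) * φ (φ b3) * w3
  refine ⟨l, hl, by rw [← hφ]; exact g1, ?_, ?_⟩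
  · have := congrArg φ (congrArg φ (congrArg φ g3))
    simp only [map_mul, h5, hw] at this
    rw [(hpow l).2.1, this]
  · have := congrArg φ (congrArg φ (congrArg φ (congrArg φ g4)))
    simp only [map_mul, h5] at this
    rw [(hpow l).2.2, this]

lemma case2 [CharP K 2] (hq : 4 ≤ q) (hK : Fintype.card K = q ^ 5) (φ : K →+* K) (hφ : ∀ x, φ x = x ^ q)
    (w : K) (hw : φ w = w) (hw2 : w ^ 2 = w + 1) (b1 b2 b4 : K)
    (e1 : b1 * φ b4 = w) (e2 : b2 * φ b4 * φ (φ b4) = 1) (e3 : b1 * φ b2 * φ (φ (φ b2)) = w ^ 2) :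
    ∃ l : K, l ≠ 0 ∧ l * b1 = l ^ q ∧ l * b2 = w * l ^ q ^ 2 ∧ l * b4 = w * l ^ q ^ 4 := by
  have w3 : w ^ 3 = 1 := by
    have h2 : (2 : K) = 0 := CharTwo.two_eq_zero
    linear_combination (w + 1) * hw2 + w * h2
  have hw0 : w ≠ 0 := by rintro rfl; simp at w3
  have hpow : ∀ x : K, x ^ q ^ 2 = φ (φ x) ∧ x ^ q ^ 3 = φ (φ (φ x)) ∧ x ^ q ^ 4 = φ (φ (φ (φ x))) := by
    intro x
    refine ⟨?_, ?_, ?_⟩ <;> simp only [hφ] <;> ring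
  have h5 : ∀ x : K, φ (φ (φ (φ (φ x)))) = x := by
    intro x
    have : x ^ q ^ 5 = x := by rw [← hK]; exact FiniteField.pow_card x
    rw [← this]; simp only [hφ]; rw [this]; nth_rw 2 [← this]; ring
  have p1 := congrArg φ e1
  have p2 := congrArg φ p1
  have p3 := congrArg φ p2
  have p4 := congrArg φ p3
  have f1 := congrArg φ e2
  have f2 := congrArg φ f1
  have f3 := congrArg φ f2
  simp only [map_mul, map_one, h5, hw] at f1 f2 f3 p1 p2 p3 p4
  -- b2 = w * b1 * φ b1
  have h2 : b1 * φ b1 = w ^ 2 * b2 := by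
    linear_combination b2 * φ b1 * φ (φ b4) * e1 + b2 * w * p1 - b1 * φ b1 * e2
  have h2' : φ b1 * φ (φ b1) = w ^ 2 * φ b2 := by
    have := congrArg φ h2; simpa only [map_mul, map_pow, hw] using this
  have h2'' : φ (φ (φ b1)) * φ (φ (φ (φ b1))) = w ^ 2 * φ (φ (φ b2)) := by
    have := congrArg φ (congrArg φ h2'); simpa only [map_mul, map_pow, hw] using this
  obtain ⟨l, hl, hlc⟩ := hilb hq hK b1 (by
    simp only [hpow, ← hφ]
    calc _ = b1 * (φ b1 * φ (φ b1)) * (φ (φ (φ b1)) * φ (φ (φ (φ b1)))) := by ring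
      _ = w ^ 4 * (b1 * φ b2 * φ (φ (φ b2))) := by rw [h2', h2'']; ring
      _ = 1 := by rw [e3]; linear_combination (w ^ 3 + 1) * w3)
  rw [← hφ] at hlc
  have hl1 : φ l ≠ 0 := by simpa using hl
  have g1' := congrArg φ hlc
  simp only [map_mul] at g1'
  have g4 : φ l * φ b4 = w * l := by
    linear_combination l * e1 - φ b4 * hlc
  refine ⟨l, hl, by rw [← hφ]; exact hlc, ?_, ?_⟩
  · rw [(hpow l).1, ← g1', ← hlc]
    linear_combination (-w * l) * h2 - l * b2 * w3
  · have := congrArg φ (congrArg φ (congrArg φ (congrArg φ g4)))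
    simp only [map_mul, h5, hw] at this
    rw [(hpow l).2.2, this]
end
end S10

/-- Proposition `prop:simple`, first part: for `q = 2^{2s}`, `w ∈ F_q`
with `w² = w + 1`, `f_w(x) = x^{q^4} + w x^{q^3} + w x^q + x` over `K = F_{q^5}` and its
adjoint `f̂_w(x) = x + x^q + w x^{q^2} + w x^{q^4}`, if `g` is an `F_q`-linearized
polynomial over `K` with `L_g = L_{f_w}` (as sets of projective points, i.e. `K`-lines
`Submodule.span K {(x, g x)}`), then some `λ ≠ 0` satisfies `λ·U_g = U_{f_w}` or
`λ·U_g = U_{f̂_w}`, where `U_g = {(x, g x) : x ∈ K}`. -/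
theorem stmt_10 (s : ℕ) (hs : 1 ≤ s) (q : ℕ) (hq : q = 2 ^ (2 * s))
    (K : Type) [Field K] [Fintype K] (hK : Fintype.card K = q ^ 5)
    (w : K) (hw : w ^ q = w) (hw2 : w ^ 2 = w + 1)
    (fw fhat : K → K)
    (hfw : fw = fun x => x ^ q ^ 4 + w * x ^ q ^ 3 + w * x ^ q + x)
    (hfhat : fhat = fun x => x + x ^ q + w * x ^ q ^ 2 + w * x ^ q ^ 4)
    (b : ℕ → K) (g : K → K)
    (hg : g = fun x => ∑ i ∈ Finset.range 5, b i * x ^ q ^ i)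
    (hLeq : {W : Submodule K (K × K) | ∃ x : K, x ≠ 0 ∧ W = Submodule.span K {(x, g x)}}
          = {W | ∃ x : K, x ≠ 0 ∧ W = Submodule.span K {(x, fw x)}}) :
    ∃ lam : K, lam ≠ 0 ∧
      ((fun u : K × K => lam • u) '' {u : K × K | ∃ x : K, u = (x, g x)}
          = {u : K × K | ∃ x : K, u = (x, fw x)} ∨
       (fun u : K × K => lam • u) '' {u : K × K | ∃ x : K, u = (x, g x)}
          = {u : K × K | ∃ x : K, u = (x, fhat x)}) := by
  classical
  have hq4 : 4 ≤ q := by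
    rw [hq, pow_mul]
    calc 4 = (2 ^ 2) ^ 1 := by norm_num
      _ ≤ (2 ^ 2) ^ s := Nat.pow_le_pow_right (by norm_num) hs
  haveI : Fact (Nat.Prime 2) := ⟨Nat.prime_two⟩
  haveI : CharP K 2 := by
    apply charP_of_card_eq_prime_pow (f := 2 * s * 5)
    rw [← Nat.card_eq_fintype_card] at hK
    first
      | rw [hK, hq, ← pow_mul]
      | rw [← Nat.card_eq_fintype_card, hK, hq, ← pow_mul]
  let φ : K →+* K := iterateFrobenius K 2 (2 * s)
  have hφ : ∀ x, φ x = x ^ q := by intro x; rw [hq]; exact iterateFrobenius_def _ _ _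
  let a : Fin 5 → K := ![1, w, 0, w, 1]
  let a' : Fin 5 → K := ![1, 1, w, 0, w]
  let c : Fin 5 → K := fun i => b i
  have ha : ∀ x, fw x = S10.G q a x := by
    intro x; simp [hfw, S10.G, Fin.sum_univ_five, a]; ring
  have ha' : ∀ x, fhat x = S10.G q a' x := by
    intro x; simp [hfhat, S10.G, Fin.sum_univ_five, a']
  have hc : ∀ x, g x = S10.G q c x := by
    intro x; simp [hg, S10.G, Finset.sum_range, c]
  let A : K →+ K := AddMonoidHom.mk' (S10.G q a) (S10.G_add φ hφ a)
  let C : K →+ K := AddMonoidHom.mk' (S10.G q c) (S10.G_add φ hφ c)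
  have hF : ∀ F : K → K, ∑ u : Kˣ, F (S10.G q a u / u) = ∑ u : Kˣ, F (S10.G q c u / u) := by
    refine S10.sumF A C ?_ ?_
    · intro x
      have : Submodule.span K {((x : K), fw x)} ∈ {W : Submodule K (K × K) | ∃ x : K, x ≠ 0 ∧ W = Submodule.span K {(x, g x)}} := by
        rw [hLeq]; exact ⟨x, x.ne_zero, rfl⟩
      obtain ⟨y, hy, h⟩ := this
      refine ⟨Units.mk0 y hy, ?_⟩
      have := S10.span_div fw g x y x.ne_zero hy h
      rw [ha, hc] at this; exact this
    · intro x
      have : Submodule.span K {((x : K), g x)} ∈ {W : Submodule K (K × K) | ∃ x : K, x ≠ 0 ∧ W = Submodule.span K {(x, fw x)}} := by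
        rw [← hLeq]; exact ⟨x, x.ne_zero, rfl⟩
      obtain ⟨y, hy, h⟩ := this
      refine ⟨Units.mk0 y hy, ?_⟩
      have := S10.span_div g fw x y x.ne_zero hy h
      rw [ha, hc] at this; exact this
  obtain ⟨r0, r1, r2, -, r4, r5⟩ := S10.rel hq4 hK φ hφ a c hF
  have hwφ : φ w = w := by rw [hφ, hw]
  have w3 : w * w * w = 1 := by
    have h2 : (2 : K) = 0 := CharTwo.two_eq_zero
    linear_combination (w + 1) * hw2 + w * h2
  have hq0 : q ≠ 0 := by omega
  simp [a, hw, hq0, w3] at r0 r1 r2 r4 r5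
  rcases r2 with h | h
  · simp only [h, zero_mul, add_zero, mul_zero, zero_add, zero_pow hq0] at r4 r5
    obtain ⟨l, hl, l1, l3, l4⟩ := S10.case1 hq4 hK φ hφ w hwφ hw2 (c 1) (c 3) (c 4)
      (by simp only [hφ]; exact r1.symm) (by simp only [hφ]; exact r4.symm)
      (by simp only [hφ]; rw [← r5]; ring)
    refine ⟨l, hl, Or.inl (S10.concl a c fw g ha hc l hl ?_)⟩
    intro i
    fin_cases i
    · simp [a, ← r0]
    · simpa [a] using l1
    · simp [a, h]
    · simpa [a] using l3
    · simpa [a] using l4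
  · simp only [h, zero_mul, add_zero, mul_zero, zero_add, zero_pow hq0] at r4 r5
    obtain ⟨l, hl, l1, l2, l4⟩ := S10.case2 hq4 hK φ hφ w hwφ hw2 (c 1) (c 2) (c 4)
      (by simp only [hφ]; exact r1.symm) (by simp only [hφ]; exact r4.symm)
      (by simp only [hφ]; rw [← r5]; ring)
    refine ⟨l, hl, Or.inr (S10.concl a' c fhat g ha' hc l hl ?_)⟩
    intro i
    fin_cases i
    · simp [a', ← r0]
    · simpa [a'] using l1
    · simpa [a'] using l2
    · simp [a', h]
    · simpa [a'] using l4
end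

section
/- Let q be a prime power, n ≥ 3 odd, s a positive integer with gcd(s, n) = 1, and δ ∈ F_{q^n}^* with N_{q^n/q}(δ) = 1, where N_{q^n/q} is the norm from F_{q^n} to F_q. Let f(x) = x + δ x^{q^{2s}} ∈ F_{q^n}[x]. Then the number of elements m ∈ F_{q^n} with dim_{F_q} ker(f(x) − m·x^{q^s}) > 1 equals (q^{n−1} − 1)/(q² − 1); that is, f is an (q^{n−1} − 1)/(q² − 1)-fat polynomial of index s. -/
theorem aux_flip {F : Type} [Field F] [Fintype F] [DecidableEq F] (hF : ringChar F ≠ 2)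
    (h : F → ℤ) (a : F) (ha : a ≠ 0) :
    ∑ x : F, h (a * x ^ 2) = ∑ z : F, (quadraticChar F a * quadraticChar F z + 1) * h z := by
  have h1 : ∑ x : F, h (a * x ^ 2) = ∑ z : F, (quadraticChar F z + 1) * h (a * z) := by
    rw [← Finset.sum_fiberwise_of_maps_to (s := Finset.univ) (t := Finset.univ)
      (g := fun x : F => x ^ 2) (fun _ _ => Finset.mem_univ _)]
    refine Finset.sum_congr rfl fun z _ => ?_
    rw [← quadraticChar_card_sqrts hF z]
    rw [Finset.sum_congr rfl (g := fun _ => h (a * z))]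
    · rw [Finset.sum_const, nsmul_eq_mul]
      congr 2
      congr 1
      ext x; simp
    · intro x hx
      simp at hx
      rw [hx]
  rw [h1]
  refine Fintype.sum_equiv (Equiv.mulLeft₀ a ha) _ _ fun z => ?_
  simp only [Equiv.mulLeft₀_apply, map_mul]
  rw [← mul_assoc, ← sq, quadraticChar_sq_one ha, one_mul]

theorem aux_diag {F : Type} [Field F] [Fintype F] [DecidableEq F] (hF : ringChar F ≠ 2)
    (g : F) (hg : quadraticChar F g = -1) (n : ℕ) (a : Fin n → F) (ha : ∀ i, a i ≠ 0) :
    let D : (Fin n → F) → F → ℤ := fun b y =>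
      (∑ x : Fin n → F, if ∑ i, b i * x i ^ 2 = y then (Fintype.card F : ℤ) else 0)
        - (Fintype.card F : ℤ) ^ n
    (∀ y, D (fun i => g * a i) y = (-1) ^ n * D a y) ∧ (∑ y, D a y = 0) := by
  have hg0 : g ≠ 0 := by rintro rfl; simp at hg
  intro D
  have key2 : ∑ y, D a y = 0 := by
    simp only [D, Finset.sum_sub_distrib]
    rw [Finset.sum_comm]
    simp [mul_comm]
  refine ⟨?_, key2⟩
  clear key2
  induction n with
  | zero => intro y; simp [D]
  | succ n ih =>
    have ih' := ih (fun i => a i.succ) (fun i => ha _)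
    set D' : (Fin n → F) → F → ℤ := fun b y =>
      (∑ x : Fin n → F, if ∑ i, b i * x i ^ 2 = y then (Fintype.card F : ℤ) else 0)
        - (Fintype.card F : ℤ) ^ n with hD'
    have hrec : ∀ (b : Fin (n+1) → F) y, D b y = ∑ t : F, D' (fun i => b i.succ) (y - b 0 * t ^ 2) := by
      intro b y
      simp only [D, D', Finset.sum_sub_distrib]
      congr 1
      · rw [← (Fin.consEquiv (fun _ => F)).sum_comp, Fintype.sum_prod_type]
        refine Finset.sum_congr rfl fun t _ => Finset.sum_congr rfl fun x _ => ?_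
        simp only [Fin.consEquiv_apply, Fin.sum_univ_succ, Fin.cons_zero, Fin.cons_succ, eq_sub_iff_add_eq']
      · simp [pow_succ, mul_comm]
    have s0 : ∑ z, D' (fun i => a i.succ) z = 0 := by
      simp only [D', Finset.sum_sub_distrib]
      rw [Finset.sum_comm]
      simp [mul_comm]
    intro y
    rw [hrec, hrec]
    have ih'' : ∀ y, D' (fun i => g * a i.succ) y = (-1) ^ n * D' (fun i => a i.succ) y := ih'
    simp_rw [ih'']
    rw [← Finset.mul_sum, pow_succ, mul_assoc]
    congr 1
    have e1 := aux_flip hF (fun z => D' (fun i => a i.succ) (y - z)) (a 0) (ha 0)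
    have e2 := aux_flip hF (fun z => D' (fun i => a i.succ) (y - z)) (g * a 0) (mul_ne_zero hg0 (ha 0))
    rw [e1, e2, neg_one_mul, eq_neg_iff_add_eq_zero, ← Finset.sum_add_distrib, map_mul, hg]
    have s1 : ∑ z, D' (fun i => a i.succ) (y - z) = 0 := by
      rw [← s0]
      exact (Equiv.subLeft y).sum_comp _
    calc _ = ∑ z, 2 * D' (fun i => a i.succ) (y - z) := Finset.sum_congr rfl fun z _ => by ring
      _ = 0 := by rw [← Finset.mul_sum, s1, mul_zero]

theorem aux_diag_card {F : Type} [Field F] [Fintype F] (hF : ringChar F ≠ 2)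
    (n : ℕ) (hn : Odd n) (a : Fin n → F) (ha : ∀ i, a i ≠ 0) :
    Nat.card {x : Fin n → F // ∑ i, a i * x i ^ 2 = 0} * Nat.card F = Nat.card F ^ n := by
  classical
  obtain ⟨g, hg⟩ := quadraticChar_exists_neg_one hF
  have hg0 : g ≠ 0 := by rintro rfl; simp at hg
  have := (aux_diag hF g hg n a ha).1 0
  simp only [hn.neg_one_pow] at this
  have e : ∀ x : Fin n → F, (∑ i, g * a i * x i ^ 2 = 0) ↔ (∑ i, a i * x i ^ 2 = 0) := by
    intro x
    simp_rw [mul_assoc, ← Finset.mul_sum]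
    simp [hg0]
  simp only [e] at this
  rw [Nat.card_eq_fintype_card, Nat.card_eq_fintype_card, Fintype.card_subtype]
  rw [← Finset.sum_filter, Finset.sum_const, nsmul_eq_mul] at this
  zify
  linarith

theorem aux_quad {F K : Type} [Field F] [Fintype F] [Field K] [Fintype K] [Algebra F K]
    (σ : K ≃ₐ[F] K) (hfix2 : ∀ x, σ (σ x) = x → x ∈ Set.range (algebraMap F K))
    (hodd : Odd (Module.finrank F K)) :
    Nat.card {w : K // Algebra.trace F K (w * σ w) = 0} * Nat.card F = Nat.card K := by
  have htr : ∀ x, Algebra.trace F K (σ x) = Algebra.trace F K x := fun x =>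
    Algebra.trace_eq_of_algEquiv σ x
  by_cases hF : ringChar F = 2
  · have : CharP F 2 := hF ▸ ringChar.charP F
    have : CharP K 2 := charP_of_injective_algebraMap (algebraMap F K).injective 2
    have hsq : Function.Bijective (fun c : F => c ^ 2) := by
      rw [← Finite.injective_iff_bijective]
      exact frobenius_inj F 2
    have h1 : Algebra.trace F K 1 = 1 := by
      rw [← map_one (algebraMap F K), Algebra.trace_algebraMap]
      obtain ⟨k, hk⟩ := hodd
      rw [hk]
      simp [add_smul, mul_smul, CharTwo.two_eq_zero]
    have hQ : ∀ (w : K) (c : F), Algebra.trace F K ((w + algebraMap F K c) * σ (w + algebraMap F K c))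
        = Algebra.trace F K (w * σ w) + c ^ 2 := by
      intro w c
      have : (w + algebraMap F K c) * σ (w + algebraMap F K c) =
        w * σ w + c • w + c • σ w + (c ^ 2) • (1 : K) := by
        simp only [map_add, AlgEquiv.commutes, Algebra.smul_def, map_pow]; ring
      rw [this]
      simp only [map_add, map_smul, htr, h1, smul_eq_mul, mul_one]
      rw [add_assoc (Algebra.trace F K (w * σ w)), CharTwo.add_self_eq_zero, add_zero]
    rw [← Nat.card_prod]
    refine Nat.card_eq_of_bijective (fun x => x.1.1 + algebraMap F K x.2) ⟨?_, ?_⟩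
    · rintro ⟨⟨w, hw⟩, c⟩ ⟨⟨w', hw'⟩, c'⟩ h
      simp only at h
      have e := hQ w c
      rw [h, hQ, hw, hw', zero_add, zero_add] at e
      have := hsq.1 e
      subst this
      simp at h
      simp [h]
    · intro z
      obtain ⟨c, hc⟩ := hsq.2 (Algebra.trace F K (z * σ z))
      refine ⟨⟨⟨z + algebraMap F K c, ?_⟩, c⟩, ?_⟩
      · rw [hQ, ← hc, CharTwo.add_self_eq_zero]
      · simp [add_assoc, CharTwo.add_self_eq_zero]
  · have h2 : (2 : F) ≠ 0 := Ring.two_ne_zero hF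
    have : Invertible (2 : F) := invertibleOfNonzero h2
    let B : LinearMap.BilinForm F K := (Algebra.traceForm F K).compRight σ.toLinearMap
    have hB : ∀ x y, B x y = Algebra.trace F K (x * σ y) := fun x y => rfl
    let Q : QuadraticForm F K := B.toQuadraticMap
    have hQ : ∀ x, Q x = Algebra.trace F K (x * σ x) := fun x => rfl
    have hsep : (QuadraticMap.associated (R := F) Q).SeparatingLeft := by
      intro w hw
      have h3 : ∀ y, Algebra.trace F K ((w + σ (σ w)) * y) = 0 := by
        intro y
        obtain ⟨y, rfl⟩ := σ.surjective y
        have := hw y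
        rw [QuadraticMap.associated_apply] at this
        simp only [hQ, map_add, smul_eq_mul, mul_add, add_mul] at this
        rw [add_mul, map_add, ← map_mul, htr, mul_comm (σ w)]
        have := congrArg (fun t => (2 : Module.End F F) • t) this
        simp only [smul_smul, mul_invOf_self, one_smul, smul_zero] at this
        linear_combination this
      have h4 : w + σ (σ w) = 0 := by
        have := (traceForm_nondegenerate F K).1 (w + σ (σ w))
        exact this fun y => by rw [Algebra.traceForm_apply]; exact h3 y
      have h5 : σ (σ w) = - w := by linear_combination h4
      obtain ⟨c, hc⟩ := hfix2 (w ^ 2) (by rw [map_pow, map_pow, h5]; ring)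
      have h6 : (σ w) ^ 2 = w ^ 2 := by rw [← map_pow, ← hc, AlgEquiv.commutes]
      have h7 : σ (σ w) = w := by
        rcases sq_eq_sq_iff_eq_or_eq_neg.1 h6 with h | h <;> simp [h]
      have h8 : (2 : K) * w = 0 := by linear_combination h4 - h7
      have h9 : (2 : K) ≠ 0 := by
        have := (map_ne_zero (algebraMap F K)).2 h2
        rwa [map_ofNat] at this
      exact (mul_eq_zero.1 h8).resolve_left h9
    obtain ⟨a, ⟨φ⟩⟩ := QuadraticForm.equivalent_weightedSumSquares_units_of_nondegenerate' Q hsep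
    rw [Module.natCard_eq_pow_finrank (K := F) (V := K), ← aux_diag_card hF _ hodd (fun i => (a i : F)) (fun i => (a i).ne_zero)]
    congr 1
    refine Nat.card_congr (φ.toEquiv.subtypeEquiv fun w => ?_)
    have := φ.map_app w
    rw [← hQ, ← this, QuadraticMap.weightedSumSquares_apply]
    simp [Units.smul_def, sq]

theorem aux_h90 {F K : Type} [Field F] [Fintype F] [Field K] [Fintype K] [Algebra F K]
    (σ : K ≃ₐ[F] K) (hfix : ∀ x, σ x = x → x ∈ Set.range (algebraMap F K))
    (u : K) (hu : Algebra.trace F K u = 0) : ∃ z, σ z - z = u := by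
  let L : K →ₗ[F] K := σ.toLinearMap - LinearMap.id
  have hL : ∀ z, L z = σ z - z := fun z => rfl
  have h1 : LinearMap.range L ≤ LinearMap.ker (Algebra.trace F K) := by
    rintro _ ⟨z, rfl⟩
    rw [LinearMap.mem_ker, hL, map_sub, Algebra.trace_eq_of_algEquiv σ, sub_self]
  have h2 : LinearMap.ker L ≤ Submodule.span F {(1 : K)} := by
    intro z hz
    rw [LinearMap.mem_ker, hL, sub_eq_zero] at hz
    obtain ⟨c, rfl⟩ := hfix z hz
    rw [Algebra.algebraMap_eq_smul_one]
    exact Submodule.smul_mem _ _ (Submodule.mem_span_singleton_self _)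
  have h3 : Module.finrank F (LinearMap.ker L) ≤ 1 := by
    rw [← finrank_span_singleton (K := F) (one_ne_zero : (1 : K) ≠ 0)]
    exact Submodule.finrank_mono h2
  have h4 := LinearMap.finrank_range_add_finrank_ker L
  have h5 := LinearMap.finrank_range_add_finrank_ker (Algebra.trace F K)
  have h6 : Module.finrank F (LinearMap.range (Algebra.trace F K)) = 1 := by
    rw [LinearMap.range_eq_top.2 (Algebra.trace_surjective F K), finrank_top, Module.finrank_self]
  have h7 := Submodule.eq_of_le_of_finrank_le h1 (by omega)
  have : u ∈ LinearMap.range L := by rw [h7]; exact hu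
  obtain ⟨z, hz⟩ := this
  exact ⟨z, hz⟩

theorem aux_W {F K : Type} [Field F] [Field K] [Algebra F K]
    (σ : K ≃ₐ[F] K) (hfix : ∀ x, σ x = x → x ∈ Set.range (algebraMap F K))
    (m y z : K) (hy0 : y ≠ 0) (hy : y + σ (σ y) = m * σ y) (hz : z + σ (σ z) = m * σ z) :
    ∃ b : F, σ (z / y) - z / y = b • (y⁻¹ * σ y⁻¹) := by
  obtain ⟨b, hb⟩ := hfix (y * σ z - z * σ y) (by
    simp only [map_sub, map_mul]
    linear_combination σ y * hz - σ z * hy)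
  refine ⟨b, ?_⟩
  have : σ y ≠ 0 := by simpa using hy0
  rw [Algebra.smul_def, hb, map_div₀, map_inv₀]
  field_simp

theorem aux_card2 {F K : Type} [Field F] [Fintype F] [Field K] [Fintype K] [Algebra F K]
    (σ : K ≃ₐ[F] K) (hfix : ∀ x, σ x = x → x ∈ Set.range (algebraMap F K))
    (m y : K) (hy0 : y ≠ 0) (hy : y + σ (σ y) = m * σ y)
    (ht : Algebra.trace F K (y⁻¹ * σ y⁻¹) = 0) :
    Nat.card {x : K // x + σ (σ x) = m * σ x} = Nat.card F ^ 2 := by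
  obtain ⟨u, hu⟩ := aux_h90 σ hfix _ ht
  have h1 : σ y ≠ 0 := by simpa using hy0
  have h2 : σ (σ y) ≠ 0 := by simpa using hy0
  have hu1 : σ u = u + y⁻¹ * (σ y)⁻¹ := by rw [← map_inv₀, ← hu]; ring
  have hu2 : σ (σ u) = u + y⁻¹ * (σ y)⁻¹ + (σ y)⁻¹ * (σ (σ y))⁻¹ := by
    rw [hu1]; simp only [map_add, map_mul, map_inv₀]; rw [hu1]
  rw [sq, ← Nat.card_prod]
  symm
  refine Nat.card_eq_of_bijective (fun x => ⟨y * (algebraMap F K x.1 + algebraMap F K x.2 * u), ?_⟩) ⟨?_, ?_⟩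
  · simp only [map_add, map_mul, AlgEquiv.commutes, hu2]
    rw [hu1]
    have hm : m = (y + σ (σ y)) / σ y := by rw [hy]; field_simp
    rw [hm]
    field_simp
    ring
  · rintro ⟨a, b⟩ ⟨a', b'⟩ h
    simp only [Subtype.mk.injEq] at h
    have h := mul_left_cancel₀ hy0 h
    have h' := congrArg σ h
    simp only [map_add, map_mul, AlgEquiv.commutes, hu1] at h'
    have h3 : (algebraMap F K b - algebraMap F K b') * (y⁻¹ * (σ y)⁻¹) = 0 := by
      linear_combination h' - h
    have h4 : algebraMap F K b = algebraMap F K b' := by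
      rcases mul_eq_zero.1 h3 with h5 | h5
      · exact sub_eq_zero.1 h5
      · simp [hy0] at h5
    have h5 : algebraMap F K a = algebraMap F K a' := by
      rw [h4] at h; exact add_right_cancel h
    rw [(algebraMap F K).injective h4, (algebraMap F K).injective h5]
  · rintro ⟨z, hz⟩
    obtain ⟨b, hb⟩ := aux_W σ hfix m y z hy0 hy hz
    obtain ⟨a, ha⟩ := hfix (z / y - algebraMap F K b * u) (by
      rw [Algebra.smul_def, ← hu] at hb
      simp only [map_sub, map_mul, AlgEquiv.commutes]
      linear_combination hb)
    refine ⟨⟨a, b⟩, ?_⟩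
    simp only [Subtype.mk.injEq, ha]
    field_simp
    ring

theorem aux_card1 {F K : Type} [Field F] [Fintype F] [Field K] [Fintype K] [Algebra F K]
    (σ : K ≃ₐ[F] K) (hfix : ∀ x, σ x = x → x ∈ Set.range (algebraMap F K))
    (m y : K) (hy0 : y ≠ 0) (hy : y + σ (σ y) = m * σ y)
    (ht : Algebra.trace F K (y⁻¹ * σ y⁻¹) ≠ 0) :
    Nat.card {x : K // x + σ (σ x) = m * σ x} = Nat.card F := by
  symm
  refine Nat.card_eq_of_bijective (fun x => ⟨y * algebraMap F K x, ?_⟩) ⟨?_, ?_⟩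
  · simp only [map_mul, AlgEquiv.commutes]
    linear_combination algebraMap F K x * hy
  · rintro a a' h
    simp only [Subtype.mk.injEq] at h
    exact (algebraMap F K).injective (mul_left_cancel₀ hy0 h)
  · rintro ⟨z, hz⟩
    obtain ⟨b, hb⟩ := aux_W σ hfix m y z hy0 hy hz
    have hb0 : b = 0 := by
      have := congrArg (Algebra.trace F K) hb
      rw [map_sub, Algebra.trace_eq_of_algEquiv σ, sub_self, map_smul, smul_eq_mul] at this
      exact (mul_eq_zero.1 this.symm).resolve_right ht
    obtain ⟨a, ha⟩ := hfix (z / y) (by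
      rw [hb0, zero_smul] at hb
      exact sub_eq_zero.1 hb)
    refine ⟨a, ?_⟩
    simp only [Subtype.mk.injEq, ha]
    field_simp

theorem aux_card_ne {K : Type} [Zero K] [Finite K] (P : K → Prop) (h0 : P 0) :
    Nat.card {x : K // P x ∧ x ≠ 0} = Nat.card {x : K // P x} - 1 := by
  have := Set.ncard_sdiff_singleton_of_mem (s := {x | P x}) (a := 0) h0
  exact this

theorem aux_main {F K : Type} [Field F] [Fintype F] [Field K] [Fintype K] [Algebra F K]
    (σ : K ≃ₐ[F] K) (hfix : ∀ x, σ x = x → x ∈ Set.range (algebraMap F K))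
    (hfix2 : ∀ x, σ (σ x) = x → x ∈ Set.range (algebraMap F K))
    (n : ℕ) (hodd : Odd n) (hn : Module.finrank F K = n) :
    Nat.card {m : K // 1 < Nat.log (Nat.card F) (Nat.card {x : K // x + σ (σ x) = m * σ x})} *
      (Nat.card F ^ 2 - 1) = Nat.card F ^ (n - 1) - 1 := by
  classical
  have hq : 1 < Nat.card F := Finite.one_lt_card
  have hN : Nat.card {w : K // Algebra.trace F K (w * σ w) = 0} = Nat.card F ^ (n - 1) := by
    have := aux_quad σ hfix2 (hn ▸ hodd)
    rw [Module.natCard_eq_pow_finrank (K := F) (V := K), hn] at this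
    have h2 : Nat.card F ^ n = Nat.card F ^ (n - 1) * Nat.card F := by
      rw [← pow_succ, Nat.sub_add_cancel hodd.pos]
    rw [h2] at this
    exact Nat.eq_of_mul_eq_mul_right (by omega) this
  have hcrit : ∀ m y : K, y ≠ 0 → y + σ (σ y) = m * σ y →
      (1 < Nat.log (Nat.card F) (Nat.card {x : K // x + σ (σ x) = m * σ x}) ↔
        Algebra.trace F K (y⁻¹ * σ y⁻¹) = 0) := by
    intro m y hy0 hy
    by_cases ht : Algebra.trace F K (y⁻¹ * σ y⁻¹) = 0
    · rw [aux_card2 σ hfix m y hy0 hy ht, Nat.log_pow hq]; exact ⟨fun _ => ht, fun _ => one_lt_two⟩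
    · rw [aux_card1 σ hfix m y hy0 hy ht]
      have : Nat.log (Nat.card F) (Nat.card F) = 1 := by
        simpa using Nat.log_pow hq 1
      simp only [this, ht]
      simp
  have hex : ∀ m : K, 1 < Nat.log (Nat.card F) (Nat.card {x : K // x + σ (σ x) = m * σ x}) →
      Nat.card {x : K // x + σ (σ x) = m * σ x} = Nat.card F ^ 2 := by
    intro m hm
    by_cases h : ∃ y : K, y ≠ 0 ∧ y + σ (σ y) = m * σ y
    · obtain ⟨y, hy0, hy⟩ := h
      exact aux_card2 σ hfix m y hy0 hy ((hcrit m y hy0 hy).1 hm)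
    · exfalso
      have : Nat.card {x : K // x + σ (σ x) = m * σ x} ≤ 1 := by
        rw [Finite.card_le_one_iff_subsingleton]
        constructor
        rintro ⟨a, ha⟩ ⟨b, hb⟩
        push Not at h
        have ha0 : a = 0 := by by_contra h0; exact h a h0 ha
        have hb0 : b = 0 := by by_contra h0; exact h b h0 hb
        simp [ha0, hb0]
      have := Nat.log_mono_right (b := Nat.card F) this
      rw [Nat.log_one_right] at this
      omega
  rw [← hN, ← aux_card_ne (fun w : K => Algebra.trace F K (w * σ w) = 0) (by simp)]
  have hsig : Nat.card (Σ m : {m : K // 1 < Nat.log (Nat.card F) (Nat.card {x : K // x + σ (σ x) = m * σ x})},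
      {x : K // x + σ (σ x) = m.1 * σ x ∧ x ≠ 0}) =
      Nat.card {m : K // 1 < Nat.log (Nat.card F) (Nat.card {x : K // x + σ (σ x) = m * σ x})} *
      (Nat.card F ^ 2 - 1) := by
    rw [Nat.card_sigma, Finset.sum_congr rfl (g := fun _ => Nat.card F ^ 2 - 1)]
    · simp [Nat.card_eq_fintype_card]
    · rintro ⟨m, hm⟩ _
      rw [aux_card_ne (fun x : K => x + σ (σ x) = m * σ x) (by simp), hex m hm]
  rw [← hsig]
  refine Nat.card_eq_of_bijective (fun x => ⟨x.2.1⁻¹, ?_, inv_ne_zero x.2.2.2⟩) ⟨?_, ?_⟩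
  · obtain ⟨⟨m, hm⟩, y, hy, hy0⟩ := x
    exact (hcrit m y hy0 hy).1 hm
  · rintro ⟨⟨m, hm⟩, y, hy, hy0⟩ ⟨⟨m', hm'⟩, y', hy', hy0'⟩ h
    simp only [Subtype.mk.injEq, inv_inj] at h
    subst h
    have : m = m' := by
      have h1 : σ y ≠ 0 := by simpa using hy0
      exact mul_right_cancel₀ h1 (hy.symm.trans hy')
    subst this
    rfl
  · rintro ⟨w, hw, hw0⟩
    have hy0 : w⁻¹ ≠ 0 := inv_ne_zero hw0
    have h1 : σ w⁻¹ ≠ 0 := by simpa using hw0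
    have hy : w⁻¹ + σ (σ w⁻¹) = ((w⁻¹ + σ (σ w⁻¹)) / σ w⁻¹) * σ w⁻¹ := by
      rw [div_mul_cancel₀ _ h1]
    refine ⟨⟨⟨_, (hcrit _ w⁻¹ hy0 hy).2 (by simpa using hw)⟩, w⁻¹, hy, hy0⟩, ?_⟩
    simp

theorem aux_gen {F K : Type} [Field F] [Fintype F] [Field K] [Fintype K] [Algebra F K]
    (k : ℕ) (hk : Nat.Coprime (Module.finrank F K) k) (x : K ≃ₐ[F] K) :
    x ∈ Subgroup.zpowers (FiniteField.frobeniusAlgEquivOfAlgebraic F K ^ k) := by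
  have hc : (Nat.card (K ≃ₐ[F] K)).Coprime k := by rwa [IsGalois.card_aut_eq_finrank]
  obtain ⟨y, rfl⟩ := (powCoprime hc).surjective x
  obtain ⟨i, rfl⟩ := (FiniteField.bijective_frobeniusAlgEquivOfAlgebraic_pow F K).2 y
  refine ⟨(i.1 : ℤ), ?_⟩
  simp only [powCoprime_apply, zpow_natCast, ← pow_mul]
  rw [mul_comm]

theorem aux_fix {F K : Type} [Field F] [Fintype F] [Field K] [Fintype K] [Algebra F K]
    (g : K ≃ₐ[F] K) (hg : ∀ x, x ∈ Subgroup.zpowers g) (z : K) (hz : g z = z) :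
    z ∈ Set.range (algebraMap F K) := by
  rw [IsGalois.mem_range_algebraMap_iff_fixed]
  intro h
  have : Subgroup.zpowers g ≤ MulAction.stabilizer (K ≃ₐ[F] K) z := by
    rw [Subgroup.zpowers_le]; exact hz
  exact this (hg h)

theorem aux_red {F K : Type} [Field F] [Fintype F] [Field K] [Fintype K] [Algebra F K]
    (n s : ℕ) (hodd : Odd n) (hn : Module.finrank F K = n) (hgcd : Nat.gcd s n = 1)
    (δ : K) (hnorm : δ ^ (∑ i ∈ Finset.range n, Nat.card F ^ i) = 1) :
    Nat.card {m : K // 1 < Nat.log (Nat.card F)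
        (Nat.card {x : K // x + δ * x ^ Nat.card F ^ (2 * s) = m * x ^ Nat.card F ^ s})} *
      (Nat.card F ^ 2 - 1) = Nat.card F ^ (n - 1) - 1 := by
  have hq : 1 < Nat.card F := Finite.one_lt_card
  set φ := FiniteField.frobeniusAlgEquivOfAlgebraic F K with hφ
  have hφk : ∀ k x, (φ ^ k) x = x ^ Nat.card F ^ k := by
    intro k x
    rw [AlgEquiv.coe_pow, FiniteField.coe_frobeniusAlgEquivOfAlgebraic_iterate, Nat.card_eq_fintype_card]
  have c1 : Nat.Coprime (Module.finrank F K) s := by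
    rw [hn, Nat.coprime_comm]; exact hgcd
  have c2 : Nat.Coprime (Module.finrank F K) (2 * s) := by
    refine Nat.Coprime.mul_right ?_ c1
    rw [hn]; exact Nat.coprime_two_right.2 hodd
  have g1 := aux_gen (F := F) (K := K) s c1
  have g2 := aux_gen (F := F) (K := K) (2 * s) c2
  rw [← hφ] at g1 g2
  have e2 : ∀ x, (φ ^ s) ((φ ^ s) x) = (φ ^ (2 * s)) x := by
    intro x
    rw [two_mul, pow_add, AlgEquiv.mul_apply]
  have hN : Algebra.norm F δ = 1 := by
    apply (algebraMap F K).injective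
    rw [FiniteField.algebraMap_norm_eq_pow, map_one, Module.natCard_eq_pow_finrank (K := F) (V := K), hn,
      ← Nat.geomSum_eq hq, hnorm]
  obtain ⟨y, hy⟩ := groupCohomology.exists_div_of_norm_eq_one g2 hN
  rw [← aux_main (φ ^ s) (aux_fix _ g1) (fun x hx => aux_fix _ g2 x (by rw [← e2]; exact hx)) n hodd hn]
  congr 1
  have y0 : (y : K) ≠ 0 := y.ne_zero
  have y1 : (φ ^ s) (y : K) ≠ 0 := (EmbeddingLike.map_ne_zero_iff).2 y0
  have y2 : (φ ^ (2 * s)) (y : K) ≠ 0 := (EmbeddingLike.map_ne_zero_iff).2 y0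
  refine Nat.card_congr ((Equiv.mulRight₀ ((φ ^ s) (y : K) / y) (div_ne_zero y1 y0)).subtypeEquiv fun m => ?_)
  suffices h : Nat.card {x : K // x + δ * x ^ Nat.card F ^ (2 * s) = m * x ^ Nat.card F ^ s} =
      Nat.card {x : K // x + (φ ^ s) ((φ ^ s) x) = (Equiv.mulRight₀ ((φ ^ s) (y : K) / y) (div_ne_zero y1 y0)) m * (φ ^ s) x} by
    rw [h]
  refine Nat.card_congr ((Equiv.mulRight₀ ((y : K)⁻¹) (inv_ne_zero y0)).subtypeEquiv fun x => ?_)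
  simp only [Equiv.mulRight₀_apply]
  rw [← hφk, ← hφk, e2, ← hy]
  simp only [map_mul, map_inv₀]
  field_simp

/-- Proposition `prop:nodd`: for `n ≥ 3` odd, `gcd(s,n) = 1` and
`δ ∈ F_{q^n}^*` with `N_{q^n/q}(δ) = δ^{1+q+⋯+q^{n-1}} = 1`, the LP-polynomial
`f(x) = x + δ x^{q^{2s}}` is `(q^{n-1}-1)/(q²-1)`-fat of index `s`: the number of
`m ∈ F_{q^n}` with `dim_{F_q} ker(f - m·x^{q^s}) > 1` (dimension encoded as `Nat.log q`
of the kernel cardinality), multiplied by `q² - 1`, equals `q^{n-1} - 1`. -/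
theorem stmt_12 (p e q n s : ℕ) (hp : p.Prime) (he : 1 ≤ e) (hq : q = p ^ e)
    (hn : 3 ≤ n) (hodd : Odd n) (hs : 1 ≤ s) (hgcd : Nat.gcd s n = 1)
    (K : Type) [Field K] [Fintype K] (hK : Fintype.card K = q ^ n)
    (δ : K) (hδ0 : δ ≠ 0) (hnorm : δ ^ (∑ i ∈ Finset.range n, q ^ i) = 1)
    (f : K → K) (hf : f = fun x => x + δ * x ^ q ^ (2 * s)) :
    Nat.card {m : K // 1 < Nat.log q (Nat.card {x : K // f x = m * x ^ q ^ s})} *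
        (q ^ 2 - 1) = q ^ (n - 1) - 1 := by
  have : Fact p.Prime := ⟨hp⟩
  have hK' : Fintype.card K = p ^ (e * n) := by rw [hK, hq, ← pow_mul]
  have : CharP K p := charP_of_card_eq_prime_pow hK'
  letI : Algebra (ZMod p) K := ZMod.algebra K p
  have hfr : Module.finrank (ZMod p) K = e * n := by
    have := FiniteField.pow_finrank_eq_card p K
    rw [hK'] at this
    exact Nat.pow_right_injective hp.two_le this
  have hcF : Nat.card (GaloisField p e) = q := by rw [GaloisField.card p e (by omega), hq]
  letI : Fintype (GaloisField p e) := Fintype.ofFinite _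
  obtain ⟨i⟩ := FiniteField.nonempty_algHom_of_finrank_dvd (F := ZMod p) (K := GaloisField p e) (L := K)
    (by rw [GaloisField.finrank p (by omega), hfr]; exact dvd_mul_right _ _)
  letI : Algebra (GaloisField p e) K := i.toRingHom.toAlgebra
  have hfin : Module.finrank (GaloisField p e) K = n := by
    have := Module.natCard_eq_pow_finrank (K := GaloisField p e) (V := K)
    rw [Nat.card_eq_fintype_card, hK, hcF] at this
    refine (Nat.pow_right_injective ?_ this).symm
    rw [hq]
    exact hp.two_le.trans (Nat.le_self_pow (by omega) p)
  have := aux_red (F := GaloisField p e) n s hodd hfin hgcd δ (by rw [hcF]; exact hnorm)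
  rw [hcF] at this
  subst hf
  exact this
end

section
/- Let q be a prime power, n ≥ 4 even, s a positive integer with gcd(s, n) = 1, d ∈ F_{q^n}^*, and δ = d^{q^s − 1} (so that N_{q^n/q}(δ) = 1). Let f(x) = x + δ x^{q^{2s}} ∈ F_{q^n}[x]. Then (q² − 1) times the number of elements m ∈ F_{q^n} with dim_{F_q} ker(f(x) − m·x^{q^s}) = 2 equals the number of u ∈ F_{q^n}^* with Tr_{q^n/q}(d·u^{q^s + 1}) = 0, where Tr_{q^n/q} is the trace from F_{q^n} to F_q. -/
lemma aux_card_comap {G H : Type} [AddCommGroup G] [AddCommGroup H] [Finite G]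
    (g : G →+ H) (S : AddSubgroup H) :
    Nat.card (S.comap g) = Nat.card g.ker * Nat.card (S ⊓ g.range : AddSubgroup H) := by
  classical
  let r : (S.comap g) →+ H := g.comp (S.comap g).subtype
  have h1 := AddSubgroup.card_eq_card_quotient_mul_card_addSubgroup r.ker
  have h2 : Nat.card ((S.comap g) ⧸ r.ker) = Nat.card r.range :=
    Nat.card_congr (QuotientAddGroup.quotientKerEquivRange r).toEquiv
  have h3 : r.range = S ⊓ g.range := by
    ext y
    simp only [AddMonoidHom.mem_range, AddSubgroup.mem_inf]
    constructor
    · rintro ⟨⟨a, ha⟩, rfl⟩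
      exact ⟨ha, a, rfl⟩
    · rintro ⟨hy, a, rfl⟩
      exact ⟨⟨a, hy⟩, rfl⟩
  have h4 : Nat.card r.ker = Nat.card g.ker := by
    refine Nat.card_congr ⟨fun a => ⟨a.1.1, a.2⟩, fun a => ⟨⟨a.1, ?_⟩, a.2⟩, fun _ => rfl, fun _ => rfl⟩
    have : g a.1 = 0 := a.2
    simp [this]
  rw [h1, h2, h3, h4, mul_comm]

lemma aux_kernel {K : Type} [Field K] [Fintype K] (σ : K →+* K) (Tr : K →+ K) (q : ℕ)
    (hF : Nat.card {x : K // σ x = x} = q)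
    (h90 : ∀ w, Tr w = 0 ↔ ∃ z, σ z - z = w)
    (hlin : ∀ c w, σ c = c → Tr (c * w) = c * Tr w)
    (d : K) (hd : d ≠ 0) (x m : K) (hx : x ≠ 0)
    (hm : d * x + σ d * σ (σ x) = d * m * σ x) :
    (Tr (1 / (d * (x * σ x))) = 0 →
      Nat.card {y : K // d * y + σ d * σ (σ y) = d * m * σ y} = q ^ 2) ∧
    (Tr (1 / (d * (x * σ x))) ≠ 0 →
      Nat.card {y : K // d * y + σ d * σ (σ y) = d * m * σ y} = q) := by
  classical
  have hsx : σ x ≠ 0 := by simpa using hx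
  let F : AddSubgroup K :=
    { carrier := {x | σ x = x}
      zero_mem' := by simp
      add_mem' := by intro a b ha hb; simp only [Set.mem_ofPred_eq] at *; rw [map_add, ha, hb]
      neg_mem' := by intro a ha; simp only [Set.mem_ofPred_eq] at *; rw [map_neg, ha] }
  have hFm : ∀ y, y ∈ F ↔ σ y = y := fun y => Iff.rfl
  have hFc : Nat.card F = q := hF
  let T : K →+ K :=
    { toFun := fun y => d * (x * σ y - y * σ x)
      map_zero' := by simp
      map_add' := by intro a b; simp only [map_add]; ring }
  have hT : ∀ y, T y = d * (x * σ y - y * σ x) := fun y => rfl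
  have hA : Nat.card {y : K // d * y + σ d * σ (σ y) = d * m * σ y} = Nat.card (F.comap T) := by
    refine Nat.card_congr (Equiv.subtypeEquivRight fun y => ?_)
    rw [AddSubgroup.mem_comap, hFm, hT]
    simp only [map_mul, map_sub]
    have key : σ d * (σ x * σ (σ y) - σ y * σ (σ x)) - d * (x * σ y - y * σ x)
      = σ x * ((d * y + σ d * σ (σ y)) - d * m * σ y) := by
      linear_combination (-σ y) * hm
    rw [← sub_eq_zero, ← sub_eq_zero (a := σ d * _), key]
    simp [hx]
  have hker : Nat.card T.ker = q := by
    rw [← hF]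
    refine Nat.card_congr ⟨fun y => ⟨y.1 / x, ?_⟩, fun z => ⟨x * z.1, ?_⟩, ?_, ?_⟩
    · have h : T y.1 = 0 := y.2
      rw [hT] at h
      have h' := (mul_eq_zero.mp h).resolve_left hd
      rw [map_div₀, div_eq_div_iff hsx hx]
      linear_combination h'
    · rw [AddMonoidHom.mem_ker, hT, map_mul, z.2]; ring
    · intro y; ext; simp; field_simp
    · intro y; ext; simp; field_simp
  have hrange : ∀ c, c ∈ F → (c ∈ T.range ↔ c * Tr (1 / (d * (x * σ x))) = 0) := by
    intro c hc
    rw [← hlin c _ hc, h90, AddMonoidHom.mem_range]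
    constructor
    · rintro ⟨y, rfl⟩
      refine ⟨y / x, ?_⟩
      rw [hT, map_div₀]; field_simp
    · rintro ⟨z, hz⟩
      refine ⟨x * z, ?_⟩
      rw [hT, map_mul]
      have : x * (σ x * σ z) - x * z * σ x = x * σ x * (σ z - z) := by ring
      rw [this, hz]; field_simp
  rw [hA, aux_card_comap, hker]
  constructor
  · intro h
    have : F ⊓ T.range = F := by
      rw [inf_eq_left]; intro c hc; rw [hrange c hc, h, mul_zero]
    rw [this, hFc, sq]
  · intro h
    have : F ⊓ T.range = ⊥ := by
      rw [eq_bot_iff]; rintro c ⟨hc, hc'⟩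
      have := (hrange c hc).1 hc'
      exact (mul_eq_zero.mp this).resolve_right h
    rw [this]; simp

lemma aux_core {K : Type} [Field K] [Fintype K] (σ : K →+* K) (Tr : K →+ K) (q : ℕ) (hq : 2 ≤ q)
    (hF : Nat.card {x : K // σ x = x} = q)
    (h90 : ∀ w, Tr w = 0 ↔ ∃ z, σ z - z = w)
    (hlin : ∀ c w, σ c = c → Tr (c * w) = c * Tr w)
    (hTσ : ∀ w, Tr (σ w) = Tr w)
    (d : K) (hd : d ≠ 0) :
    (q ^ 2 - 1) * Nat.card {m : K //
        Nat.log q (Nat.card {y : K // d * y + σ d * σ (σ y) = d * m * σ y}) = 2}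
      = Nat.card {u : K // u ≠ 0 ∧ Tr (d * (u * σ u)) = 0} := by
  classical
  have hbij : Function.Bijective σ := Finite.injective_iff_bijective.mp σ.injective
  have hX : Nat.card {u : K // u ≠ 0 ∧ Tr (d * (u * σ u)) = 0}
      = Nat.card {x : K // x ≠ 0 ∧ Tr (1 / (d * (x * σ x))) = 0} := by
    refine Nat.card_congr (Equiv.subtypeEquiv ((Equiv.ofBijective σ hbij).trans
      ((Equiv.inv K).trans (Equiv.divRight₀ d hd))) ?_)
    intro u
    simp only [Equiv.trans_apply, Equiv.ofBijective_apply, Equiv.inv_apply,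
      Equiv.divRight₀_apply]
    by_cases hu : u = 0
    · simp [hu]
    have hsu : σ u ≠ 0 := by simpa using hu
    have hssu : σ (σ u) ≠ 0 := by simpa using hsu
    have hsd : σ d ≠ 0 := by simpa using hd
    have e : (1 / (d * ((σ u)⁻¹ / d * σ ((σ u)⁻¹ / d)))) = σ (d * (u * σ u)) := by
      rw [map_div₀, map_inv₀, map_mul, map_mul]; field_simp
    rw [e, hTσ]
    simp [hu, hd]
  rw [hX]
  set P : K → K → Prop := fun m y => d * y + σ d * σ (σ y) = d * m * σ y with hP
  have hP0 : ∀ m, P m 0 := by intro m; simp [hP]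
  have hk := fun x m hx hm => aux_kernel σ Tr q hF h90 hlin d hd x m hx hm
  have hlogq : Nat.log q q = 1 := by
    have := Nat.log_pow (b := q) (by omega) 1
    simpa using this
  have hlogq2 : Nat.log q (q ^ 2) = 2 := Nat.log_pow (by omega) 2
  have hW : ∀ m x, x ≠ 0 → P m x →
      (Nat.log q (Nat.card {y : K // P m y}) = 2 ↔ Tr (1 / (d * (x * σ x))) = 0) := by
    intro m x hx hm
    by_cases h : Tr (1 / (d * (x * σ x))) = 0
    · rw [(hk x m hx hm).1 h, hlogq2]; exact iff_of_true rfl h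
    · rw [(hk x m hx hm).2 h, hlogq]; exact iff_of_false (by norm_num) h
  have hfib : ∀ m, Nat.log q (Nat.card {y : K // P m y}) = 2 →
      Nat.card {y : K // P m y} = q ^ 2 := by
    intro m h
    by_cases hex : ∃ x, x ≠ 0 ∧ P m x
    · obtain ⟨x, hx, hm⟩ := hex
      exact (hk x m hx hm).1 ((hW m x hx hm).1 h)
    · exfalso
      push Not at hex
      have : Nat.card {y : K // P m y} = 1 := by
        rw [Nat.card_eq_one_iff_unique]
        refine ⟨⟨fun a b => ?_⟩, ⟨0, hP0 m⟩⟩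
        have h0 : ∀ a : {y : K // P m y}, a.1 = 0 := fun a => by
          by_contra h; exact hex _ h a.2
        ext; rw [h0 a, h0 b]
      rw [this] at h; simp at h
  let M : K → K := fun x => (d * x + σ d * σ (σ x)) / (d * σ x)
  have hM : ∀ x m, x ≠ 0 → (P m x ↔ M x = m) := by
    intro x m hx
    have hsx : σ x ≠ 0 := by simpa using hx
    simp only [hP, M]
    rw [div_eq_iff (mul_ne_zero hd hsx)]
    constructor
    · intro h; rw [h]; ring
    · intro h; rw [h]; ring
  let X : Finset K := Finset.univ.filter fun x => x ≠ 0 ∧ Tr (1 / (d * (x * σ x))) = 0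
  let W : Finset K := Finset.univ.filter fun m => Nat.log q (Nat.card {y : K // P m y}) = 2
  have cX : Nat.card {x : K // x ≠ 0 ∧ Tr (1 / (d * (x * σ x))) = 0} = X.card := by
    rw [Nat.card_eq_fintype_card, Fintype.card_subtype]
  have cW : Nat.card {m : K // Nat.log q (Nat.card {y : K // P m y}) = 2} = W.card := by
    rw [Nat.card_eq_fintype_card, Fintype.card_subtype]
  rw [cX, cW]
  have hmaps : ∀ x ∈ X, M x ∈ W := by
    intro x hx
    simp only [X, W, Finset.mem_filter, Finset.mem_univ, true_and] at hx ⊢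
    exact (hW (M x) x hx.1 ((hM x _ hx.1).2 rfl)).2 hx.2
  rw [Finset.card_eq_sum_card_fiberwise hmaps, Finset.sum_const_nat (m := q ^ 2 - 1), mul_comm]
  intro m hm
  simp only [W, Finset.mem_filter, Finset.mem_univ, true_and] at hm
  have h1 := hfib m hm
  rw [Nat.card_eq_fintype_card, Fintype.card_subtype] at h1
  have h2 : (X.filter fun x => M x = m) = (Finset.univ.filter fun y => P m y).erase 0 := by
    ext x
    simp only [X, Finset.mem_filter, Finset.mem_univ, true_and, Finset.mem_erase]
    constructor
    · rintro ⟨⟨hx, -⟩, h⟩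
      exact ⟨hx, (hM x m hx).2 h⟩
    · rintro ⟨hx, h⟩
      exact ⟨⟨hx, (hW m x hx h).1 hm⟩, (hM x m hx).1 h⟩
  rw [h2, Finset.card_erase_of_mem (by simp [hP0]), h1]

theorem stmt_13 (p e q n s : ℕ) (hp : p.Prime) (he : 1 ≤ e) (hq : q = p ^ e)
    (hn : 4 ≤ n) (heven : Even n) (hs : 1 ≤ s) (hgcd : Nat.gcd s n = 1)
    (K : Type) [Field K] [Fintype K] (hK : Fintype.card K = q ^ n)
    (d : K) (hd : d ≠ 0) (δ : K) (hδ : δ = d ^ (q ^ s - 1))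
    (f : K → K) (hf : f = fun x => x + δ * x ^ q ^ (2 * s)) :
    (q ^ 2 - 1) *
        Nat.card {m : K // Nat.log q (Nat.card {x : K // f x = m * x ^ q ^ s}) = 2}
      = Nat.card {u : K //
          u ≠ 0 ∧ ∑ i ∈ Finset.range n, (d * u ^ (q ^ s + 1)) ^ q ^ i = 0} := by
  classical
  have hq2 : 2 ≤ q := by
    rw [hq]; exact hp.two_le.trans (Nat.le_self_pow (by omega) p)
  haveI : Fact p.Prime := ⟨hp⟩
  haveI : CharP K p := by
    have h : Fintype.card K = p ^ (e * n) := by rw [hK, hq, pow_mul]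
    exact charP_of_card_eq_prime_pow h
  let fr : ℕ → K →+* K := fun i => iterateFrobenius K p (e * i)
  have hfr : ∀ i x, fr i x = x ^ q ^ i := by
    intro i x; simp only [fr, iterateFrobenius_def, hq, pow_mul]
  let σ := fr s
  have hσ : ∀ x, σ x = x ^ q ^ s := hfr s
  have hσσ : ∀ x, σ (σ x) = x ^ q ^ (2 * s) := by
    intro x; rw [hσ, hσ, ← pow_mul, ← pow_add, two_mul]
  let Tr : K →+ K := ∑ i ∈ Finset.range n, (fr i : K →+ K)
  have hTr : ∀ x, Tr x = ∑ i ∈ Finset.range n, x ^ q ^ i := by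
    intro x; simp [Tr, AddMonoidHom.finsetSum_apply, hfr]
  have hqn : ∀ x : K, x ^ q ^ n = x := by
    intro x; rw [← hK]; exact FiniteField.pow_card x
  have hTq : ∀ x, Tr (x ^ q) = Tr x := by
    intro x
    have h1 := Finset.sum_range_succ (fun i => x ^ q ^ i) n
    have h2 := Finset.sum_range_succ' (fun i => x ^ q ^ i) n
    rw [hTr, hTr]
    simp only [← pow_mul, ← pow_succ'] 
    rw [h1, hqn, pow_zero, pow_one] at h2
    exact (add_right_cancel h2).symm
  have hTqi : ∀ i x, Tr (x ^ q ^ i) = Tr x := by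
    intro i
    induction i with
    | zero => intro x; simp
    | succ k ih => intro x; rw [pow_succ, pow_mul, hTq, ih]
  have hTσ : ∀ w, Tr (σ w) = Tr w := by intro w; rw [hσ, hTqi]
  -- fixed points
  have hiter : ∀ (r : ℕ) (c : K), c ^ q ^ r = c → ∀ k, c ^ q ^ (r * k) = c := by
    intro r c hc k
    induction k with
    | zero => simp
    | succ k ih => rw [Nat.mul_succ, pow_add, pow_mul, ih, hc]
  have hfix : ∀ c, σ c = c → c ^ q = c := by
    intro c hc
    rw [hσ] at hc
    obtain ⟨a, ha⟩ := Nat.exists_mul_mod_eq_one_of_coprime (k := n) (n := s) hgcd (by omega)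
    have h1 := hiter s c hc a
    rw [← Nat.div_add_mod (s * a) n, ha.2, pow_add, pow_mul,
      hiter n c (hqn c), pow_one] at h1
    exact h1
  have hlin : ∀ c w, σ c = c → Tr (c * w) = c * Tr w := by
    intro c w hc
    have h := hfix c hc
    rw [hTr, hTr, Finset.mul_sum]
    refine Finset.sum_congr rfl fun i _ => ?_
    have := hiter 1 c (by simpa using h) i
    rw [one_mul] at this
    rw [mul_pow, this]
  let D : K →+ K := (σ : K →+ K) - AddMonoidHom.id K
  have hD : ∀ z, D z = σ z - z := fun z => rfl
  have hDle : D.range ≤ Tr.ker := by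
    rintro _ ⟨z, rfl⟩
    rw [AddMonoidHom.mem_ker, hD, map_sub, hTσ, sub_self]
  have hkerD : Nat.card D.ker = Nat.card {x : K // σ x = x} :=
    Nat.card_congr (Equiv.subtypeEquivRight fun z => by
      rw [AddMonoidHom.mem_ker, hD, sub_eq_zero])
  have hfixle : Nat.card {x : K // σ x = x} ≤ q := by
    rw [Nat.card_eq_fintype_card, Fintype.card_subtype]
    have hne : (Polynomial.X ^ q - Polynomial.X : Polynomial K) ≠ 0 :=
      FiniteField.X_pow_card_sub_X_ne_zero K (by omega)
    have hdeg : (Polynomial.X ^ q - Polynomial.X : Polynomial K).natDegree = q :=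
      FiniteField.X_pow_card_sub_X_natDegree_eq K (by omega)
    calc _ ≤ (Polynomial.X ^ q - Polynomial.X : Polynomial K).roots.toFinset.card := by
          apply Finset.card_le_card
          intro z hz
          simp only [Finset.mem_filter, Finset.mem_univ, true_and] at hz
          rw [Multiset.mem_toFinset, Polynomial.mem_roots hne]
          simp [hfix z hz]
      _ ≤ _ := (Multiset.toFinset_card_le _).trans (Polynomial.card_roots' _)
      _ = q := hdeg
  have hTrle : Nat.card Tr.ker ≤ q ^ (n - 1) := by
    have : Nat.card Tr.ker = Nat.card {x : K // Tr x = 0} := rfl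
    rw [this, Nat.card_eq_fintype_card, Fintype.card_subtype]
    let g : Polynomial K := ∑ i ∈ Finset.range n, Polynomial.X ^ q ^ i
    have hcoef : g.coeff 1 = 1 := by
      simp only [g, Polynomial.finsetSum_coeff, Polynomial.coeff_X_pow]
      rw [Finset.sum_eq_single 0]
      · simp
      · intro b _ hb
        have : 1 < q ^ b := Nat.one_lt_pow hb (by omega)
        rw [if_neg (by omega)]
      · intro h; exact absurd (Finset.mem_range.2 (by omega)) h
    have hne : g ≠ 0 := by intro h; rw [h] at hcoef; simp at hcoef
    have hdeg : g.natDegree ≤ q ^ (n - 1) := by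
      apply Polynomial.natDegree_sum_le_of_forall_le
      intro i hi
      rw [Polynomial.natDegree_X_pow]
      exact Nat.pow_le_pow_right (by omega) (by have := Finset.mem_range.1 hi; omega)
    calc _ ≤ g.roots.toFinset.card := by
          apply Finset.card_le_card
          intro z hz
          simp only [Finset.mem_filter, Finset.mem_univ, true_and] at hz
          rw [Multiset.mem_toFinset, Polynomial.mem_roots hne]
          rw [hTr] at hz
          simp [g, Polynomial.eval_finsetSum, hz]
      _ ≤ _ := (Multiset.toFinset_card_le _).trans (Polynomial.card_roots' _)
      _ ≤ _ := hdeg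
  have hprod : Nat.card D.ker * Nat.card D.range = q ^ (n - 1) * q := by
    have := aux_card_comap D ⊤
    rw [AddSubgroup.comap_top, top_inf_eq] at this
    rw [← this, ← pow_succ, Nat.sub_add_cancel (by omega), ← hK]
    simp
  have hrle : Nat.card D.range ≤ Nat.card Tr.ker := AddSubgroup.card_le_of_le hDle
  have hqpos : 0 < q ^ (n - 1) := by positivity
  have hF : Nat.card {x : K // σ x = x} = q := by
    apply le_antisymm hfixle
    rw [hkerD] at hprod
    by_contra hlt
    push Not at hlt
    nlinarith [Nat.mul_le_mul_left (Nat.card {x : K // σ x = x}) (hrle.trans hTrle)]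
  have hr : Nat.card D.range = q ^ (n - 1) := by
    rw [hkerD, hF, mul_comm] at hprod
    exact Nat.eq_of_mul_eq_mul_right (by omega) hprod
  have hEq : D.range = Tr.ker := AddSubgroup.eq_of_le_of_card_ge hDle (by rw [hr]; exact hTrle)
  have h90 : ∀ w, Tr w = 0 ↔ ∃ z, σ z - z = w := by
    intro w
    rw [← AddMonoidHom.mem_ker, ← hEq, AddMonoidHom.mem_range]
    rfl
  have main := aux_core σ Tr q hq2 hF h90 hlin hTσ d hd
  have hdδ : d * δ = σ d := by
    rw [hδ, hσ, ← pow_succ', Nat.sub_add_cancel (Nat.one_le_pow _ _ (by omega))]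
  have e1 : ∀ m x : K, (f x = m * x ^ q ^ s) ↔ (d * x + σ d * σ (σ x) = d * m * σ x) := by
    intro m x
    rw [hf, hσσ, hσ x, ← hdδ]
    constructor
    · intro h
      simp only at h
      rw [mul_assoc d m, ← h]; ring
    · intro h
      apply mul_left_cancel₀ hd
      simp only
      linear_combination h
  have e2 : ∀ u : K, ∑ i ∈ Finset.range n, (d * u ^ (q ^ s + 1)) ^ q ^ i = Tr (d * (u * σ u)) := by
    intro u; rw [hTr, hσ, pow_succ']
  simp only [e1, e2]
  exact main
end

section
/- Let q be a prime power and n, s positive integers with gcd(s, n) = 1. For z ∈ F_{q^n}, one has Σ_{i=0}^{n−1} z^{(q^{si} − 1)/(q^s − 1)} = 0 if and only if there exists y ∈ F_{q^n}^* such that z = y^{q^s − 1} and Tr_{q^n/q}(y) = 0. -/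
theorem perm_aux {M : Type*} [CommMonoid M] (f : ℕ → M) (s n : ℕ) (hn : 1 ≤ n)
    (hgcd : Nat.gcd s n = 1) (hf : ∀ i, f (i % n) = f i) :
    ∏ i ∈ Finset.range n, f (s * i) = ∏ i ∈ Finset.range n, f i := by
  have hmaps : Set.MapsTo (fun i => s * i % n) (Finset.range n : Set ℕ) (Finset.range n) := by
    intro i _
    simp only [Finset.coe_range, Set.mem_Iio]
    exact Nat.mod_lt _ hn
  have hinj : Set.InjOn (fun i => s * i % n) (Finset.range n : Set ℕ) := by
    intro a ha b hb hab
    simp only [Finset.coe_range, Set.mem_Iio] at ha hb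
    have h1 : s * a ≡ s * b [MOD n] := hab
    have h2 : a ≡ b [MOD n] :=
      Nat.ModEq.cancel_left_of_coprime (by rw [Nat.gcd_comm]; exact hgcd) h1
    have h3 : a % n = b % n := h2
    rwa [Nat.mod_eq_of_lt ha, Nat.mod_eq_of_lt hb] at h3
  exact Finset.prod_nbij (fun i => s * i % n) hmaps hinj
    (Finset.surjOn_of_injOn_of_card_le _ hmaps hinj le_rfl) (fun i _ => (hf _).symm)

theorem geom_aux (Q i : ℕ) (hQ : 1 ≤ Q) :
    (Q - 1) * (∑ l ∈ Finset.range i, Q ^ l) + 1 = Q ^ i := by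
  obtain ⟨k, rfl⟩ := Nat.exists_eq_add_of_le' hQ
  have := geom_sum_mul_add k i
  simpa [mul_comm] using this

theorem h90_aux (G : Type*) [CommGroup G] [IsCyclic G] [Finite G] (a N b : ℕ) (z : G)
    (hm : Nat.card G = a * N) (hg : Nat.gcd b (a * N) = a) (hz : z ^ N = 1) :
    ∃ w : G, z = w ^ b := by
  obtain ⟨g, hgen⟩ := IsCyclic.exists_generator (α := G)
  obtain ⟨k, rfl⟩ := Subgroup.mem_zpowers_iff.1 (hgen z)
  have ho : orderOf g = a * N := by rw [orderOf_eq_card_of_forall_mem_zpowers hgen, hm]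
  have hpos : 0 < a * N := hm ▸ Nat.card_pos
  have hN : (N : ℤ) ≠ 0 := by
    rintro h
    have : N = 0 := by exact_mod_cast h
    simp [this] at hpos
  have h1 : g ^ (k * (N : ℤ)) = 1 := by rw [zpow_mul, zpow_natCast, hz]
  have h2 := orderOf_dvd_iff_zpow_eq_one.2 h1
  rw [ho, Nat.cast_mul] at h2
  obtain ⟨j, rfl⟩ := Int.dvd_of_mul_dvd_mul_right hN h2
  have hb := Nat.gcd_eq_gcd_ab b (a * N)
  rw [hg] at hb
  refine ⟨g ^ (Nat.gcdA b (a * N) * j), ?_⟩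
  have hc : g ^ ((a * N : ℕ) : ℤ) = 1 := by rw [zpow_natCast, ← ho, pow_orderOf_eq_one]
  rw [hb, add_mul, zpow_add, mul_assoc ((a * N : ℕ) : ℤ), zpow_mul g ((a * N : ℕ) : ℤ), hc, one_zpow, mul_one,
    ← zpow_natCast, ← zpow_mul]
  congr 1
  ring

/-- from the proof of Proposition `th:correspondence`: for
`gcd(s,n) = 1` and `z ∈ F_{q^n}`, one has `Σ_{i=0}^{n-1} z^{(q^{si}-1)/(q^s-1)} = 0`
iff `z = y^{q^s-1}` for some `y ∈ F_{q^n}^*` with `Tr_{q^n/q}(y) = 0`.  The exponent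
`(q^{si}-1)/(q^s-1)` is written as the geometric sum `Σ_{l<i} q^{sl}` (so the `i = 0`
term is `z^0 = 1`), and `Tr_{q^n/q}(y) = Σ_{i<n} y^{q^i}`. -/
theorem stmt_14 (p e q n s : ℕ) (hp : p.Prime) (he : 1 ≤ e) (hq : q = p ^ e)
    (hn : 1 ≤ n) (hs : 1 ≤ s) (hgcd : Nat.gcd s n = 1)
    (K : Type) [Field K] [Fintype K] (hK : Fintype.card K = q ^ n)
    (z : K) :
    (∑ i ∈ Finset.range n, z ^ (∑ l ∈ Finset.range i, q ^ (s * l))) = 0 ↔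
      ∃ y : K, y ≠ 0 ∧ z = y ^ (q ^ s - 1) ∧ (∑ i ∈ Finset.range n, y ^ q ^ i) = 0 := by
  have hp1 : Fact p.Prime := ⟨hp⟩
  have hq2 : 2 ≤ q := by
    rw [hq]
    exact hp.two_le.trans (Nat.le_self_pow (by omega) p)
  have hchar : CharP K p := charP_of_card_eq_prime_pow (f := e * n) (by rw [hK, hq, pow_mul])
  have hQ : 1 ≤ q ^ s := Nat.one_le_pow _ _ (by omega)
  have hfr : ∀ y : K, y ^ q ^ n = y := fun y => by rw [← hK, FiniteField.pow_card]
  have hfr2 : ∀ (y : K) (k : ℕ), y ^ q ^ (n * k) = y := by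
    intro y k
    induction k with
    | zero => simp
    | succ k ih => rw [Nat.mul_succ, pow_add, pow_mul, ih, hfr]
  have hper : ∀ (y : K) (i : ℕ), y ^ q ^ (i % n) = y ^ q ^ i := by
    intro y i
    conv_rhs => rw [← Nat.div_add_mod i n, pow_add, pow_mul, hfr2]
  have hsum : ∀ y : K, ∑ i ∈ Finset.range n, y ^ q ^ (s * i) = ∑ i ∈ Finset.range n, y ^ q ^ i :=
    fun y => perm_aux (M := Multiplicative K) (fun i => Multiplicative.ofAdd (y ^ q ^ i)) s n hn
      hgcd (fun i => congrArg _ (hper y i))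
  have hprod : ∀ y : K, ∏ i ∈ Finset.range n, y ^ q ^ (s * i) = ∏ i ∈ Finset.range n, y ^ q ^ i :=
    fun y => perm_aux (fun i => y ^ q ^ i) s n hn hgcd (hper y)
  have key : ∀ y : K, y * (∑ i ∈ Finset.range n, (y ^ (q ^ s - 1)) ^ (∑ l ∈ Finset.range i, q ^ (s * l)))
      = ∑ i ∈ Finset.range n, y ^ q ^ i := by
    intro y
    rw [← hsum, Finset.mul_sum]
    refine Finset.sum_congr rfl fun i _ => ?_
    have := geom_aux (q ^ s) i hQ
    simp only [← pow_mul] at this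
    rw [← pow_mul, ← pow_succ', this]
  constructor
  · intro h
    have hz0 : z ≠ 0 := by
      rintro rfl
      obtain ⟨m, rfl⟩ := Nat.exists_eq_add_of_le' hn
      rw [Finset.sum_range_succ', Finset.sum_eq_zero] at h
      · simp at h
      · intro i _
        apply zero_pow
        rw [Finset.sum_range_succ']
        simp
    have hN : z ^ (∑ l ∈ Finset.range n, q ^ (s * l)) = 1 := by
      have h1 : (∑ i ∈ Finset.range n, z ^ (∑ l ∈ Finset.range i, q ^ (s * l))) ^ q ^ s * z
          = ∑ i ∈ Finset.range n, z ^ (∑ l ∈ Finset.range (i + 1), q ^ (s * l)) := by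
        have hqs : q ^ s = p ^ (e * s) := by rw [hq, pow_mul]
        rw [hqs, sum_pow_char_pow, Finset.sum_mul, ← hqs]
        refine Finset.sum_congr rfl fun i _ => ?_
        rw [← pow_mul, ← pow_succ, Finset.sum_range_succ', Finset.sum_mul]
        simp [mul_add, pow_add]
      have h2 := Finset.sum_range_succ (fun i => z ^ (∑ l ∈ Finset.range i, q ^ (s * l))) n
      rw [Finset.sum_range_succ', ← h1, h, zero_pow (by omega)] at h2
      simpa using h2.symm
    have hN' : z ^ (∑ l ∈ Finset.range n, q ^ l) = 1 := by
      rw [← Finset.prod_pow_eq_pow_sum, ← hprod, Finset.prod_pow_eq_pow_sum, hN]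
    have hg := geom_aux q n (by omega)
    obtain ⟨w, hw⟩ := h90_aux Kˣ (q - 1) (∑ l ∈ Finset.range n, q ^ l) (q ^ s - 1)
      (Units.mk0 z hz0)
      (by rw [Nat.card_units, Nat.card_eq_fintype_card, hK]; omega)
      (by
        have : (q - 1) * (∑ l ∈ Finset.range n, q ^ l) = q ^ n - 1 := by omega
        rw [this, Nat.pow_sub_one_gcd_pow_sub_one, hgcd, pow_one])
      (by ext; simpa using hN')
    have hw' : z = (w : K) ^ (q ^ s - 1) := by
      have := congrArg Units.val hw
      simpa using this
    refine ⟨w, w.ne_zero, hw', ?_⟩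
    rw [← key, ← hw', h, mul_zero]
  · rintro ⟨y, hy, rfl, ht⟩
    rw [← key] at ht
    exact (mul_eq_zero.1 ht).resolve_left hy
end
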